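/- Let p ≡ 5 (mod 8), q = p^s, m ≥ 2 with 2^m exactly dividing q-1, and λ a character of order 2^m on F_q. Define the integer C_{m-1} by p^{s/2^{m-2}} = C_{m-1}^2 + D_{m-1}^2 with C_{m-1} ≡ -1 (mod 4) and p ∤ C_{m-1}. Then (G(λ) + G(λ̄))^2 = -2 q^{(2^{m-1}-1)/2^{m-1}} (q^{1/2^{m-1}} - (-1)^m C_{m-1}) and (G(λ) - G(λ̄))^2 = 2 q^{(2^{m-1}-1)/2^{m-1}} (q^{1/2^{m-1}} + (-1)^m C_{m-1}). -/

import Mathlib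

/-!
Write `s = 2 ^ n * t` with `t` odd. As `p ≡ 5 (mod 8)`, the exact power of two dividing `q - 1` is
`2 ^ (n + 2)`, so `m = n + 2` and the integer `C` belongs to the field with `p ^ t` elements. For a
character `λ` of order `2 ^ m` one has `λ(-1) = -1`, hence `G(λ) G(λ⁻¹) = -q`
(`gaussSum_mul_gaussSum_inv`). Both formulas of the theorem therefore follow, by expanding the
squares, from the single evaluation
`G(λ)² + G(λ⁻¹)² = 2 (-1) ^ n C (p ^ t) ^ (2 ^ n - 1) √(p ^ t)` (`gaussSum_sq_add`), which is proved
by induction on `n`.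

Induction step (`gaussSum_sq_descent`, `exists_norm_char`). Let `K` be the subfield of index two,
with `r` elements, and `η` the quadratic character of `F`. The duplication formula
`λ(4) G(λ) G(λη) = G(λ²) G(η)` (`gaussSum_duplication`) combines with three facts: `λ(4) = -1`;
`G(λη) = G(λ)`, because `λη = λ ^ r` is conjugate to `λ` under Frobenius; and `λ² = μ ∘ N` for a
character `μ` of `K` of order `2 ^ (m - 1)`, so that the Davenport–Hasse relation for quadratic
extensions (`davenport_hasse_two`) gives `G(λ²) = -G(μ)²` and `G(η) = -r`. The outcome is
`G(λ)² = -r G(μ)²`.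

Base case (`gaussSum_quartic`). For a quartic character in odd degree, `G(λ)² = J(λ, λ) G(η)`.
The Jacobi sum is `a + b i` with `p ^ t = a² + b²`; a congruence modulo `2 + 2i` gives
`a ≡ -1 (mod 4)`, and its reduction to `F`, up to sign a binomial coefficient prime to `p` by a theorem of Lucas,
gives `p ∤ a` (`jacobiSum_quartic`). Such an `a` is unique (`sum_two_squares_unique`), so it is `C`.
Finally `G(η) = √(p ^ t)`: diagonalising the trace form reduces this to the prime field
(`gaussSum_qchar_odd`), where the sign is determined by comparing, at a primitive `p`-th root of
unity and then modulo `p`, the Gauss sum with a product of sines (`gaussSum_qchar_zmod`).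
-/

/-- The Gauss sum over a finite field of characteristic `p`, with values in `ℂ`. -/
noncomputable def gaussC (p : ℕ) (F : Type*) [Field F] [Fintype F] [Algebra (ZMod p) F]
    (ψ : MulChar F ℂ) : ℂ :=
  ∑ x : F, ψ x *
    Complex.exp (2 * Real.pi * Complex.I * ((Algebra.trace (ZMod p) F x).val : ℂ) / p)

/-! ### Additive characters and Frobenius invariance -/

/-- The canonical additive character `x ↦ exp (2πi Tr(x) / p)` of `F`. -/
noncomputable def trChar (p : ℕ) [Fact p.Prime] (F : Type*) [Field F]
    [Algebra (ZMod p) F] : AddChar F ℂ :=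
  (ZMod.stdAddChar (N := p)).compAddMonoidHom (Algebra.trace (ZMod p) F).toAddMonoidHom

lemma trChar_apply (p : ℕ) [Fact p.Prime] (F : Type*) [Field F]
    [Algebra (ZMod p) F] (x : F) :
    trChar p F x = ZMod.stdAddChar (Algebra.trace (ZMod p) F x) := rfl

lemma gaussC_eq (p : ℕ) [Fact p.Prime] (F : Type*) [Field F] [Fintype F] [Algebra (ZMod p) F]
    (χ : MulChar F ℂ) : gaussC p F χ = gaussSum χ (trChar p F) := by
  unfold gaussC gaussSum
  refine Finset.sum_congr rfl fun x _ => ?_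
  rw [trChar_apply, ZMod.stdAddChar_apply, ZMod.toCircle_apply]

lemma trChar_isPrimitive (p : ℕ) [Fact p.Prime] (F : Type*) [Field F] [Fintype F]
    [Algebra (ZMod p) F] : (trChar p F).IsPrimitive := by
  refine AddChar.IsPrimitive.of_ne_one fun h => ?_
  obtain ⟨x, hx⟩ := Algebra.trace_surjective (ZMod p) F 1
  have h1 : trChar p F x = 1 := by rw [h]; rfl
  rw [trChar_apply, hx, ← (ZMod.stdAddChar (N := p)).map_zero_eq_one] at h1
  exact one_ne_zero (ZMod.injective_stdAddChar h1)

lemma trChar_pow_p (p : ℕ) [Fact p.Prime] (F : Type*) [Field F] [Fintype F]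
    [Algebra (ZMod p) F] (x : F) : trChar p F (x ^ p) = trChar p F x := by
  have h := Algebra.trace_eq_of_algEquiv
    (FiniteField.frobeniusAlgEquivOfAlgebraic (ZMod p) F) x
  rw [FiniteField.coe_frobeniusAlgEquivOfAlgebraic, ZMod.card] at h
  rw [trChar_apply, trChar_apply, h]

/-- The trace, hence `trChar`, is invariant under Frobenius. -/
lemma trChar_pow_p_pow (p : ℕ) [Fact p.Prime] (F : Type*) [Field F] [Fintype F]
    [Algebra (ZMod p) F] (n : ℕ) (x : F) : trChar p F (x ^ p ^ n) = trChar p F x := by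
  induction n with
  | zero => simp
  | succ n ih => rw [pow_succ, pow_mul, trChar_pow_p, ih]

/-- Gauss sums are invariant under `χ ↦ χ ^ p ^ n`, because the trace is Frobenius-invariant. -/
lemma gaussSum_pow_p_pow (p : ℕ) [Fact p.Prime] (F : Type*) [Field F] [Fintype F]
    [Algebra (ZMod p) F] (χ : MulChar F ℂ) (n : ℕ) :
    gaussSum (χ ^ p ^ n) (trChar p F) = gaussSum χ (trChar p F) := by
  have hp := (Fact.out : p.Prime).pos
  have : CharP F p := charP_of_injective_algebraMap (algebraMap (ZMod p) F).injective p
  unfold gaussSum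
  refine Fintype.sum_bijective (fun x : F => x ^ p ^ n) ?_ _ _ fun x => ?_
  · exact Finite.injective_iff_bijective.mp (iterateFrobenius_inj F p n)
  · rw [MulChar.pow_apply' _ (by positivity), ← map_pow, trChar_pow_p_pow]

/-! ### The quadratic character and the duplication formula -/

/-- The quadratic character of `F` with values in `ℂ`. -/
noncomputable def qchar (F : Type*) [Field F] [Fintype F] : MulChar F ℂ :=
  open Classical in (quadraticChar F).ringHomComp (Int.castRingHom ℂ)

section
variable {F : Type*} [Field F] [Fintype F]

open Classical in
lemma qchar_apply (x : F) : qchar F x = ((quadraticChar F x : ℤ) : ℂ) := rfl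

lemma qchar_sq (x : F) (hx : x ≠ 0) : qchar F (x ^ 2) = 1 := by
  classical
  rw [qchar_apply, quadraticChar_sq_one' hx]; simp

lemma qchar_eq_one {x : F} (hx : x ≠ 0) (h : IsSquare x) : qchar F x = 1 := by
  obtain ⟨y, rfl⟩ := h
  rw [← sq]; exact qchar_sq y (by rintro rfl; simp at hx)

lemma qchar_eq_neg_one {x : F} (h : ¬ IsSquare x) : qchar F x = -1 := by
  classical
  rw [qchar_apply, quadraticChar_neg_one_iff_not_isSquare.mpr h]; simp

lemma qchar_ne_one (hF : ringChar F ≠ 2) : qchar F ≠ 1 := by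
  classical
  exact (MulChar.ringHomComp_ne_one_iff (Int.castRingHom ℂ).injective_int).mpr
    (quadraticChar_ne_one hF)

lemma qchar_isQuadratic : (qchar F).IsQuadratic := by
  classical
  exact (quadraticChar_isQuadratic F).comp _

/-- A nontrivial character with trivial square is the quadratic character. -/
lemma eq_qchar {χ : MulChar F ℂ} (h1 : χ ≠ 1) (h2 : χ ^ 2 = 1) : χ = qchar F := by
  have hsq : ∀ x : F, x ≠ 0 → IsSquare x → χ x = 1 := by
    rintro x hx ⟨y, rfl⟩
    have hy : y ≠ 0 := by rintro rfl; simp at hx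
    rw [← sq, map_pow, ← MulChar.pow_apply' _ two_ne_zero, h2, MulChar.one_apply hy.isUnit]
  obtain ⟨a, ha⟩ := MulChar.ne_one_iff.mp h1
  have ha' : ¬ IsSquare (a : F) := fun h => ha (hsq _ a.ne_zero h)
  have haχ : χ a = -1 := by
    have h3 : χ a ^ 2 = 1 := by
      rw [← MulChar.pow_apply' _ two_ne_zero, h2, MulChar.one_apply a.isUnit]
    rcases mul_self_eq_one_iff.mp ((sq _).symm.trans h3) with h | h <;> tauto
  ext x
  by_cases hx : IsSquare (x : F)
  · rw [hsq _ x.ne_zero hx, qchar_eq_one x.ne_zero hx]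
  · have hax : IsSquare ((a : F) * x) := by
      classical
      rw [← quadraticChar_one_iff_isSquare (mul_ne_zero a.ne_zero x.ne_zero), map_mul,
        quadraticChar_neg_one_iff_not_isSquare.mpr hx,
        quadraticChar_neg_one_iff_not_isSquare.mpr ha']
      norm_num
    have := hsq _ (mul_ne_zero a.ne_zero x.ne_zero) hax
    rw [map_mul, haχ] at this
    rw [qchar_eq_neg_one hx]
    linear_combination -this

/-- Summation over squares: `y` has `1 + η(y)` square roots. -/
lemma sum_comp_sq (hF : ringChar F ≠ 2) (f : F → ℂ) :
    ∑ u, f (u ^ 2) = ∑ v, (1 + qchar F v) * f v := by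
  classical
  have h : ∀ v : F, (1 + qchar F v) = ((Finset.univ.filter fun u : F => u ^ 2 = v).card : ℂ) := by
    intro v
    have := quadraticChar_card_sqrts hF v
    have h2 : {x : F | x ^ 2 = v}.toFinset = Finset.univ.filter fun u : F => u ^ 2 = v := by
      ext; simp
    rw [h2] at this
    rw [qchar_apply]
    have h3 := congrArg (Int.cast : ℤ → ℂ) this
    push_cast at h3
    rw [h3]; ring
  rw [← Finset.sum_fiberwise (s := Finset.univ) (g := fun u : F => u ^ 2)]
  refine Finset.sum_congr rfl fun v _ => ?_
  rw [h, Finset.sum_congr rfl (g := fun _ => f v), Finset.sum_const, nsmul_eq_mul]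
  intro u hu
  rw [(Finset.mem_filter.mp hu).2]

/-- `χ(4) J(χ, χ) = J(χ, η)` for the quadratic character `η`: complete the square in
`x (1 - x)`. -/
lemma jacobiSum_self (hF : ringChar F ≠ 2) {χ : MulChar F ℂ} (hχ : χ ≠ 1) :
    χ 4 * jacobiSum χ χ = jacobiSum χ (qchar F) := by
  have h2 : (2 : F) ≠ 0 := Ring.two_ne_zero hF
  calc χ 4 * jacobiSum χ χ = ∑ x, χ (1 - (2 * x - 1) ^ 2) := by
        rw [jacobiSum, Finset.mul_sum]
        refine Finset.sum_congr rfl fun x _ => ?_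
        rw [← map_mul, ← map_mul]; congr 1; ring
    _ = ∑ u, χ (1 - u ^ 2) := by
        refine Fintype.sum_bijective (fun x : F => 2 * x - 1) ?_ _ _ fun x => rfl
        refine Finite.injective_iff_bijective.mp fun x y h => ?_
        exact mul_left_cancel₀ h2 (sub_left_injective h)
    _ = ∑ v, (1 + qchar F v) * χ (1 - v) := sum_comp_sq hF fun v => χ (1 - v)
    _ = ∑ v, χ (1 - v) + jacobiSum (qchar F) χ := by
        simp only [add_mul, one_mul, Finset.sum_add_distrib]; rfl
    _ = jacobiSum χ (qchar F) := by
        rw [jacobiSum_comm, show ∑ v, χ (1 - v) = ∑ v, χ v from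
          (Equiv.subLeft (1 : F)).sum_comp (fun v => χ v),
          MulChar.sum_eq_zero_of_ne_one hχ, zero_add]

/-- The duplication formula for Gauss sums:
`χ(4) G(χ) G(χη) = G(χ²) G(η)` with `η` the quadratic character. -/
lemma gaussSum_duplication (hF : ringChar F ≠ 2) {χ : MulChar F ℂ} (hχ2 : χ ^ 2 ≠ 1)
    {ψ : AddChar F ℂ} (hψ : ψ.IsPrimitive) :
    χ 4 * (gaussSum χ ψ * gaussSum (χ * qchar F) ψ) =
      gaussSum (χ ^ 2) ψ * gaussSum (qchar F) ψ := by
  have hχ : χ ≠ 1 := by rintro rfl; simp at hχ2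
  have hcard : ((Fintype.card F : ℕ) : ℂ) ≠ 0 := by exact_mod_cast Fintype.card_ne_zero
  have hη : χ * qchar F ≠ 1 := by
    intro h
    apply hχ2
    have h3 : χ ^ 2 * (qchar F) ^ 2 = 1 := by rw [← mul_pow, h, one_pow]
    rwa [qchar_isQuadratic.sq_eq_one, mul_one] at h3
  have e1 := jacobiSum_mul_nontrivial (χ := χ) (φ := χ) (by rwa [← sq]) ψ
  have e2 := jacobiSum_mul_nontrivial hη ψ
  have e3 := jacobiSum_self hF hχ
  have hg := gaussSum_ne_zero_of_nontrivial hcard hχ hψ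
  rw [← sq] at e1
  apply mul_left_cancel₀ hg
  rw [← e3] at e2
  linear_combination (-χ 4 * gaussSum (χ * qchar F) ψ) * e1 + gaussSum (χ ^ 2) ψ * e2

end

/-! ### The Davenport–Hasse relation in degree two -/

/-- The Davenport–Hasse lifting relation for quadratic extensions `L = K(√d)`. With
`z = (t + u√d) / 2` one has `Tr z = t` and `N z = (t² - d u²) / 4`, so that the lifted sum is
`∑ (1 - η(v)) μ((t² - v) / 4) ψ(t)`; the square `G(μ)²` is the same sum with `1 + η(v)`, and the
two add up to zero. -/
lemma davenport_hasse_two {K L : Type*} [Field K] [Field L] [Fintype K] [Fintype L]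
    [Algebra K L] (hK : ringChar K ≠ 2) (hcard : Fintype.card L = Fintype.card K ^ 2)
    {μ : MulChar K ℂ} (hμ : μ ≠ 1) (ψ : AddChar K ℂ) :
    ∑ z : L, μ (Algebra.norm K z) * ψ (Algebra.trace K L z) = -(gaussSum μ ψ) ^ 2 := by
  classical
  have h2 : (2 : K) ≠ 0 := Ring.two_ne_zero hK
  have h2L : (2 : L) ≠ 0 := by
    have := (map_ne_zero (algebraMap K L)).mpr h2
    rwa [map_ofNat] at this
  set r := Fintype.card K with hr
  have hrank : Module.finrank K L = 2 := by
    have := Module.card_eq_pow_finrank (K := K) (V := L)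
    rw [hcard] at this
    exact (Nat.pow_right_injective (Fintype.one_lt_card (α := K)) this).symm
  have hLK : ringChar L ≠ 2 := by
    rwa [← Algebra.ringChar_eq K L]
  have hodd : r % 2 = 1 := FiniteField.odd_card_of_char_ne_two hK
  obtain ⟨d, hd⟩ := FiniteField.exists_nonsquare hK
  have hd0 : d ≠ 0 := by rintro rfl; simp at hd
  have hdpow : d ^ (r / 2) = -1 := by
    rcases FiniteField.pow_dichotomy hK hd0 with h | h
    · exact absurd ((FiniteField.isSquare_iff hK hd0).mpr h) hd
    · exact h
  have hdL : IsSquare (algebraMap K L d) := by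
    rw [FiniteField.isSquare_iff hLK (by simpa using hd0), hcard]
    obtain ⟨k, hk⟩ : ∃ k, r = 2 * k + 1 := ⟨r / 2, by omega⟩
    have h3 : r ^ 2 / 2 = (r / 2) * (r + 1) := by
      rw [hk, show (2 * k + 1) / 2 = k by omega,
        show (2 * k + 1) ^ 2 = 2 * (k * (2 * k + 1 + 1)) + 1 by ring]
      omega
    have h4 : Even (r + 1) := by rw [hk]; exact ⟨k + 1, by ring⟩
    rw [h3, pow_mul, ← map_pow, hdpow, map_neg, map_one, h4.neg_one_pow]
  -- `δ = √d`, which Frobenius sends to `-δ`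
  obtain ⟨δ, hδ⟩ := hdL
  have hδr : δ ^ r = -δ := by
    have h3 : δ ^ r = (δ * δ) ^ (r / 2) * δ := by
      rw [← sq, ← pow_mul, ← pow_succ]; congr 1; omega
    rw [h3, ← hδ, ← map_pow, hdpow]; simp
  have hfix : ∀ t : K, (algebraMap K L t) ^ r = algebraMap K L t := fun t => by
    rw [← map_pow, FiniteField.pow_card]
  have hfrob : ∀ x y : L, (x + y) ^ r = x ^ r + y ^ r := fun x y => by
    obtain ⟨q, hq⟩ := CharP.exists K
    obtain ⟨n, hqp, hn⟩ := FiniteField.card K q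
    have : Fact q.Prime := ⟨hqp⟩
    have : CharP L q := charP_of_injective_algebraMap (algebraMap K L).injective q
    rw [hr, hn, add_pow_char_pow]
  set e : K × K → L := fun x => algebraMap K L (x.1 / 2) + algebraMap K L (x.2 / 2) * δ with he
  have her : ∀ x, e x ^ r = algebraMap K L (x.1 / 2) - algebraMap K L (x.2 / 2) * δ := fun x => by
    rw [he, hfrob, mul_pow, hfix, hfix, hδr]; ring
  have htr : ∀ x, Algebra.trace K L (e x) = x.1 := fun x => by
    apply (algebraMap K L).injective
    rw [FiniteField.algebraMap_trace_eq_sum_pow, hrank, Finset.sum_range_succ,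
      Finset.sum_range_one, Nat.card_eq_fintype_card, ← hr, pow_zero, pow_one, pow_one, her]
    simp only [he, map_div₀, map_ofNat]
    field_simp; ring
  have hnm : ∀ x, Algebra.norm K (e x) = (x.1 ^ 2 - d * x.2 ^ 2) / 4 := fun x => by
    apply (algebraMap K L).injective
    rw [FiniteField.algebraMap_norm_eq_prod_pow, hrank, Finset.prod_range_succ,
      Finset.prod_range_one, Nat.card_eq_fintype_card, ← hr, pow_zero, pow_one, pow_one, her]
    simp only [he, map_div₀, map_ofNat, map_sub, map_mul, map_pow, hδ]
    rw [show (4 : L) = 2 * 2 by norm_num]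
    field_simp; ring
  have hbij : Function.Bijective e := by
    rw [Fintype.bijective_iff_injective_and_card]
    refine ⟨fun x y hxy => ?_, by rw [Fintype.card_prod, hcard, sq]⟩
    have h1 : x.1 = y.1 := by rw [← htr x, hxy, htr]
    have h2' : x.2 = y.2 := by
      by_contra hne
      simp only [he, h1, add_right_inj] at hxy
      have hδ0 : δ ≠ 0 := by rintro rfl; simp at hδ; exact hd0 hδ
      have := (algebraMap K L).injective (mul_right_cancel₀ hδ0 hxy)
      exact hne (by field_simp at this; exact this)
    exact Prod.ext h1 h2'
  have e0 : ∑ z : L, μ (Algebra.norm K z) * ψ (Algebra.trace K L z) =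
      ∑ t : K, ∑ v : K, (1 - qchar K v) * (μ ((t ^ 2 - v) / 4) * ψ t) := by
    rw [← hbij.sum_comp, Fintype.sum_prod_type]
    refine Finset.sum_congr rfl fun t _ => ?_
    simp only [htr, hnm]
    rw [sum_comp_sq hK (fun v => μ ((t ^ 2 - d * v) / 4) * ψ t)]
    refine Fintype.sum_bijective (fun v : K => d * v) ?_ _ _ fun v => ?_
    · exact Finite.injective_iff_bijective.mp (mul_right_injective₀ hd0)
    · rw [map_mul, qchar_eq_neg_one hd]; ring
  -- the variables are changed from `(a, b)` to `(a + b, a - b)`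
  have e1 : gaussSum μ ψ ^ 2 =
      ∑ t : K, ∑ v : K, (1 + qchar K v) * (μ ((t ^ 2 - v) / 4) * ψ t) := by
    have e2 : gaussSum μ ψ ^ 2 = ∑ x : K × K, μ (x.1 * x.2) * ψ (x.1 + x.2) := by
      rw [sq, gaussSum, Finset.sum_mul_sum, Fintype.sum_prod_type]
      refine Finset.sum_congr rfl fun a _ => Finset.sum_congr rfl fun b _ => ?_
      rw [map_mul, AddChar.map_add_eq_mul]; ring
    have e3 : ∑ x : K × K, μ (x.1 * x.2) * ψ (x.1 + x.2) =
        ∑ x : K × K, μ ((x.1 ^ 2 - x.2 ^ 2) / 4) * ψ x.1 := by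
      refine Fintype.sum_bijective (fun x : K × K => (x.1 + x.2, x.1 - x.2)) ?_ _ _ fun x => ?_
      · refine Finite.injective_iff_bijective.mp fun x y h => ?_
        simp only [Prod.mk.injEq] at h
        refine Prod.ext (mul_left_cancel₀ h2 ?_) (mul_left_cancel₀ h2 ?_)
        · linear_combination h.1 + h.2
        · linear_combination h.1 - h.2
      · congr 2
        have h4 : (4 : K) ≠ 0 := by rw [show (4 : K) = 2 * 2 by norm_num]; exact mul_ne_zero h2 h2
        field_simp; ring
    rw [e2, e3, Fintype.sum_prod_type]
    refine Finset.sum_congr rfl fun t _ => ?_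
    exact sum_comp_sq hK (fun v => μ ((t ^ 2 - v) / 4) * ψ t)
  rw [e0, e1, eq_neg_iff_add_eq_zero, ← Finset.sum_add_distrib]
  refine Finset.sum_eq_zero fun t _ => ?_
  rw [← Finset.sum_add_distrib]
  have h4 : (4 : K) ≠ 0 := by rw [show (4 : K) = 2 * 2 by norm_num]; exact mul_ne_zero h2 h2
  have e4 : ∑ v : K, μ ((t ^ 2 - v) / 4) = 0 := by
    rw [← MulChar.sum_eq_zero_of_ne_one hμ]
    refine Fintype.sum_bijective (fun v : K => (t ^ 2 - v) / 4) ?_ _ _ fun v => rfl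
    refine Finite.injective_iff_bijective.mp fun x y h => ?_
    have h : (t ^ 2 - x) / 4 = (t ^ 2 - y) / 4 := h
    field_simp at h
    linear_combination -h
  rw [← zero_mul (2 * ψ t), ← e4, Finset.sum_mul]
  refine Finset.sum_congr rfl fun v _ => ?_
  ring

/-! ### The sign of the quadratic Gauss sum over the prime field -/

open Polynomial in
/-- The Euler operator `X d/dX` on polynomials. -/
noncomputable def eulerOp {R : Type*} [CommRing R] : R[X] →ₗ[R] R[X] :=
  LinearMap.mulLeft R X ∘ₗ derivative

section
open Polynomial
variable {R : Type*} [CommRing R]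

lemma eulerOp_apply (g : R[X]) : eulerOp g = X * derivative g := rfl

lemma eulerOp_iter_X_pow (i j : ℕ) : (eulerOp^[i]) (X ^ j : R[X]) = C ((j : R) ^ i) * X ^ j := by
  induction i with
  | zero => simp
  | succ i ih =>
    rw [Function.iterate_succ_apply', ih, eulerOp_apply]
    rcases j with _ | j
    · rw [pow_zero, mul_one, derivative_C, mul_zero]; simp
    · simp only [derivative_mul, derivative_C, derivative_X_pow, Nat.add_sub_cancel]
      simp only [map_pow, map_natCast]
      ring

/-- Each application of the Euler operator lowers the order of vanishing at `1` by at most one. -/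
lemma eulerOp_iter_dvd (i a : ℕ) (g : R[X]) (h : (X - 1) ^ (a + i) ∣ g) :
    (X - 1) ^ a ∣ (eulerOp^[i]) g := by
  induction i generalizing g with
  | zero => simpa using h
  | succ i ih =>
    rw [Function.iterate_succ_apply]
    apply ih
    obtain ⟨k, rfl⟩ := h
    refine ⟨((a + i + 1 : ℕ) : R[X]) * X * k + X * (X - 1) * derivative k, ?_⟩
    rw [eulerOp_apply, ← add_assoc]
    simp only [derivative_mul, derivative_pow, derivative_sub, derivative_X, derivative_one,
      Nat.add_sub_cancel]
    simp
    ring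

lemma eulerOp_iter_eval (n : ℕ) (g : R[X]) :
    ((eulerOp^[n]) ((X - 1) ^ n * g)).eval 1 = (n.factorial : R) * g.eval 1 := by
  induction n generalizing g with
  | zero => simp
  | succ n ih =>
    have h : eulerOp ((X - 1) ^ (n + 1) * g) =
        (X - 1) ^ n * (((n + 1 : ℕ) : R[X]) * X * g + X * (X - 1) * derivative g) := by
      rw [eulerOp_apply]
      simp only [derivative_mul, derivative_pow, derivative_sub, derivative_X, derivative_one,
        Nat.add_sub_cancel]
      simp
      ring
    rw [Function.iterate_succ_apply, h, ih, Nat.factorial_succ]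
    simp
    ring

end

section
variable (p : ℕ) [Fact p.Prime]

/-- Wilson's theorem, folded in half: `((p - 1) / 2)!` is a square root of `-1`. -/
lemma half_factorial_sq (hp : p % 8 = 5) : (((p / 2).factorial : ZMod p)) ^ 2 = -1 := by
  obtain ⟨n, hn⟩ : ∃ n, p = 2 * n + 1 := ⟨p / 2, by omega⟩
  have hn2 : Even n := ⟨n / 2, by omega⟩
  have hdiv : p / 2 = n := by omega
  have hw := ZMod.wilsons_lemma p
  rw [show p - 1 = n + n by omega, ← Finset.prod_range_add_one_eq_factorial,
    Finset.prod_range_add] at hw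
  rw [← Finset.prod_range_reflect (fun x => n + x + 1) n] at hw
  push_cast at hw
  have h2 : ∀ j ∈ Finset.range n, ((n : ZMod p) + ((n - 1 - j : ℕ) : ZMod p) + 1) = -1 * (j + 1) := by
    intro j hj
    rw [Finset.mem_range] at hj
    have h3 : ((n + (n - 1 - j) + 1 + (j + 1) : ℕ) : ZMod p) = 0 := by
      rw [ZMod.natCast_eq_zero_iff]
      exact dvd_of_eq (by omega)
    push_cast at h3
    linear_combination h3
  rw [Finset.prod_congr rfl h2, Finset.prod_mul_distrib, Finset.prod_const, Finset.card_range,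
    hn2.neg_one_pow, one_mul] at hw
  rw [hdiv, ← Finset.prod_range_add_one_eq_factorial]
  push_cast
  rw [sq, hw]

lemma two_pow_half (hp : p % 8 = 5) : (2 : ZMod p) ^ (p / 2) = -1 := by
  have hc : ringChar (ZMod p) ≠ 2 := by rw [ZMod.ringChar_zmod_n]; omega
  have h2 : (2 : ZMod p) ≠ 0 := Ring.two_ne_zero hc
  have h := FiniteField.pow_dichotomy hc h2
  rw [ZMod.card] at h
  refine h.resolve_left fun h1 => ?_
  have h3 := (FiniteField.isSquare_iff hc h2).mpr (by rwa [ZMod.card])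
  rw [FiniteField.isSquare_two_iff, ZMod.card] at h3
  omega

open Polynomial in
/-- The quadratic Gauss sum is not equal to the product `∏ (ζ ^ k - ζ ^ (-k))`, `1 ≤ k ≤ n`, where
`n = (p - 1) / 2`. If it were, the difference of the two polynomials would be divisible by the
cyclotomic polynomial, hence modulo `p` by `(X - 1) ^ (p - 1)`. Applying the Euler operator `n`
times and evaluating at `1`, the Gauss sum gives `∑ j ^ (2 n) = -1` and the product gives
`2 ^ n (n !)² = 1`, which differ modulo `p`. -/
lemma gauss_ne_prod (hp : p % 8 = 5) {ζ : ℂ} (hζ : IsPrimitiveRoot ζ p) :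
    ∑ j ∈ Finset.range p, ((quadraticChar (ZMod p) j : ℤ) : ℂ) * ζ ^ j ≠
      ∏ k ∈ Finset.range (p / 2), (ζ ^ (k + 1) - ζ ^ (p - 1 - k)) := by
  intro heq
  have hpp := (Fact.out : p.Prime)
  set n := p / 2 with hn
  set f : ℤ[X] := ∑ j ∈ Finset.range p, C (quadraticChar (ZMod p) j) * X ^ j -
    ∏ k ∈ Finset.range n, (X ^ (k + 1) - X ^ (p - 1 - k)) with hf
  have hf0 : aeval ζ f = 0 := by
    rw [hf, map_sub, map_sum, map_prod, sub_eq_zero]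
    simpa using heq
  have hdvd : cyclotomic p ℤ ∣ f := by
    rw [cyclotomic_eq_minpoly hζ hpp.pos]
    exact minpoly.isIntegrallyClosed_dvd (hζ.isIntegral hpp.pos) hf0
  have hdvd2 : (X - 1 : (ZMod p)[X]) ^ (p - 1) ∣ f.map (Int.castRingHom (ZMod p)) := by
    have h := Polynomial.map_dvd (Int.castRingHom (ZMod p)) hdvd
    rw [map_cyclotomic] at h
    convert h using 1
    have h1 := cyclotomic_prime_mul_X_sub_one (ZMod p) p
    have hX : (X - 1 : (ZMod p)[X]) ≠ 0 := by
      rw [← C_1]; exact X_sub_C_ne_zero 1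
    apply mul_right_cancel₀ hX
    rw [h1, ← pow_succ, Nat.sub_add_cancel hpp.one_le, sub_pow_char, one_pow]
  have hzero : ((eulerOp^[n]) (f.map (Int.castRingHom (ZMod p)))).eval 1 = 0 := by
    have h1 : (X - 1 : (ZMod p)[X]) ^ (1 + n) ∣ f.map (Int.castRingHom (ZMod p)) :=
      (pow_dvd_pow _ (by omega)).trans hdvd2
    have h2 := eulerOp_iter_dvd n 1 _ h1
    rw [pow_one, ← C_1] at h2
    exact dvd_iff_isRoot.mp h2
  have hfmap : f.map (Int.castRingHom (ZMod p)) =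
      ∑ j ∈ Finset.range p, C ((quadraticChar (ZMod p) j : ℤ) : ZMod p) * X ^ j -
        (X - 1) ^ n * ∏ k ∈ Finset.range n,
          (∑ i ∈ Finset.range (k + 1), X ^ i - ∑ i ∈ Finset.range (p - 1 - k), X ^ i) := by
    rw [hf, Polynomial.map_sub, Polynomial.map_sum, Polynomial.map_prod]
    congr 1
    · simp
    · have : (X - 1 : (ZMod p)[X]) ^ n = ∏ k ∈ Finset.range n, (X - 1) := by simp
      rw [this, ← Finset.prod_mul_distrib]
      refine Finset.prod_congr rfl fun k _ => ?_
      simp only [Polynomial.map_sub, Polynomial.map_pow, map_X]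
      linear_combination -geom_sum_mul (X : (ZMod p)[X]) (k + 1) +
        geom_sum_mul (X : (ZMod p)[X]) (p - 1 - k)
  have hiter : ∀ a b : (ZMod p)[X], (eulerOp^[n]) (a - b) = (eulerOp^[n]) a - (eulerOp^[n]) b :=
    fun a b => by simp only [← Module.End.pow_apply, map_sub]
  have hsum : ((eulerOp^[n]) (∑ j ∈ Finset.range p,
      C ((quadraticChar (ZMod p) j : ℤ) : ZMod p) * X ^ j)).eval 1 = -1 := by
    rw [← Module.End.pow_apply, map_sum, eval_finsetSum]
    have h1 : ∀ j ∈ Finset.range p, (((eulerOp ^ n : Module.End (ZMod p) (ZMod p)[X]))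
        (C ((quadraticChar (ZMod p) j : ℤ) : ZMod p) * X ^ j)).eval 1 =
        (j : ZMod p) ^ (p - 1) := by
      intro j _
      rw [← smul_eq_C_mul, map_smul, Module.End.pow_apply, eulerOp_iter_X_pow]
      have hc : ringChar (ZMod p) ≠ 2 := by rw [ZMod.ringChar_zmod_n]; omega
      have h2 := quadraticChar_eq_pow_of_char_ne_two' hc (j : ZMod p)
      rw [ZMod.card, ← hn] at h2
      simp only [eval_smul, eval_mul, eval_C, eval_pow, eval_X, one_pow, mul_one, smul_eq_mul]
      rw [h2, ← pow_add]
      congr 1; omega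
    rw [Finset.sum_congr rfl h1]
    have h3 : p = (p - 1) + 1 := by have := hpp.pos; omega
    have h4 : ∀ j ∈ Finset.range (p - 1), (((j + 1 : ℕ)) : ZMod p) ^ (p - 1) = 1 := by
      intro j hj
      apply ZMod.pow_card_sub_one_eq_one
      rw [Ne, ZMod.natCast_eq_zero_iff]
      intro hd
      have := Nat.le_of_dvd (by omega) hd
      rw [Finset.mem_range] at hj
      omega
    conv_lhs => enter [1]; rw [h3]
    rw [Finset.sum_range_succ', Finset.sum_congr rfl h4]
    have h5 : p - 1 ≠ 0 := by omega
    simp [h5, Nat.cast_sub hpp.one_le]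
  have hprod : ((eulerOp^[n]) ((X - 1) ^ n * ∏ k ∈ Finset.range n,
      (∑ i ∈ Finset.range (k + 1), X ^ i - ∑ i ∈ Finset.range (p - 1 - k), X ^ i) :
        (ZMod p)[X])).eval 1 = 1 := by
    rw [eulerOp_iter_eval, eval_prod]
    have h1 : ∀ k ∈ Finset.range n, (∑ i ∈ Finset.range (k + 1), X ^ i -
        ∑ i ∈ Finset.range (p - 1 - k), X ^ i : (ZMod p)[X]).eval 1 = 2 * ((k + 1 : ℕ) : ZMod p) := by
      intro k hk
      rw [Finset.mem_range] at hk
      have h3 : (((p - 1 - k) + (k + 1) : ℕ) : ZMod p) = 0 := by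
        rw [ZMod.natCast_eq_zero_iff]
        exact dvd_of_eq (by omega)
      simp [eval_finsetSum]
      push_cast at h3
      linear_combination -h3
    rw [Finset.prod_congr rfl h1, Finset.prod_mul_distrib, Finset.prod_const, Finset.card_range,
      ← Nat.cast_prod, Finset.prod_range_add_one_eq_factorial, two_pow_half p hp]
    linear_combination -half_factorial_sq p hp
  rw [hfmap, hiter, eval_sub, hsum, hprod] at hzero
  have hc : ringChar (ZMod p) ≠ 2 := by rw [ZMod.ringChar_zmod_n]; omega
  have h2 : (2 : ZMod p) ≠ 0 := Ring.two_ne_zero hc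
  apply h2
  linear_combination -hzero

open Complex in
/-- The product `∏ (ζ ^ k - ζ ^ (-k))` equals `i ^ n` times a product of positive sines, where
`n = (p - 1) / 2 ≡ 2 (mod 4)`; its square is the product of all `1 - ζ ^ (2 k)`, which is `p`. -/
lemma prod_eq_neg_sqrt (hp : p % 8 = 5) {ζ : ℂ} (hζ : ζ = exp (2 * Real.pi * I / p)) :
    ∏ k ∈ Finset.range (p / 2), (ζ ^ (k + 1) - ζ ^ (p - 1 - k)) = -((Real.sqrt p : ℝ) : ℂ) := by
  have hpp := (Fact.out : p.Prime)
  obtain ⟨n, hn⟩ : ∃ n, p = 2 * n + 1 := ⟨p / 2, by omega⟩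
  have hn2 : Even n := ⟨n / 2, by omega⟩
  have hdiv : p / 2 = n := by omega
  have hprim : IsPrimitiveRoot ζ p := by rw [hζ]; exact isPrimitiveRoot_exp p hpp.ne_zero
  have hp0 : (p : ℂ) ≠ 0 := by exact_mod_cast hpp.ne_zero
  set S : ℝ := ∏ k ∈ Finset.range n, (2 * Real.sin (2 * Real.pi * (k + 1) / p)) with hS
  have hSpos : 0 < S := by
    refine Finset.prod_pos fun k hk => ?_
    rw [Finset.mem_range] at hk
    have hpr : (0 : ℝ) < p := by exact_mod_cast hpp.pos
    refine mul_pos two_pos (Real.sin_pos_of_pos_of_lt_pi (by positivity) ?_)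
    rw [div_lt_iff₀ hpr]
    have h1 : (2 * (k + 1) : ℝ) < p := by exact_mod_cast (by omega : 2 * (k + 1) < p)
    nlinarith [Real.pi_pos]
  have hP : ∏ k ∈ Finset.range n, (ζ ^ (k + 1) - ζ ^ (p - 1 - k)) = -(S : ℂ) := by
    have h1 : ∀ k ∈ Finset.range n, ζ ^ (k + 1) - ζ ^ (p - 1 - k) =
        I * ((2 * Real.sin (2 * Real.pi * (k + 1) / p) : ℝ) : ℂ) := by
      intro k hk
      rw [Finset.mem_range] at hk
      have h2 : ζ ^ (p - 1 - k) = (ζ ^ (k + 1))⁻¹ := by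
        apply eq_inv_of_mul_eq_one_left
        rw [← pow_add, show p - 1 - k + (k + 1) = p by omega, hprim.pow_eq_one]
      rw [h2, hζ, ← exp_nat_mul, ← exp_neg]
      have h3 : ((k + 1 : ℕ) : ℂ) * (2 * Real.pi * I / p) =
          ((2 * Real.pi * (k + 1) / p : ℝ) : ℂ) * I := by push_cast; ring
      rw [h3]
      push_cast
      rw [Complex.sin, ← neg_mul]
      linear_combination (exp (2 * Real.pi * (k + 1) / p * I) -
        exp (-(2 * Real.pi * (k + 1) / p) * I)) * I_mul_I
    rw [Finset.prod_congr rfl h1, Finset.prod_mul_distrib, Finset.prod_const, Finset.card_range,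
      ← Complex.ofReal_prod, ← hS]
    have h4 : (I : ℂ) ^ n = -1 := by
      obtain ⟨j, hj⟩ : ∃ j, n = 4 * j + 2 := ⟨n / 4, by omega⟩
      rw [hj, pow_add, pow_mul, I_pow_four, one_pow, one_mul, I_sq]
    rw [h4]; ring
  have hsq : (∏ k ∈ Finset.range n, (ζ ^ (k + 1) - ζ ^ (p - 1 - k))) ^ 2 = p := by
    have hμ : IsPrimitiveRoot (ζ ^ 2) (2 * n + 1) := by
      rw [← hn]
      refine hprim.pow_of_coprime 2 ?_
      rw [Nat.coprime_two_left, Nat.odd_iff]; omega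
    have h1 := hμ.prod_one_sub_pow_eq_order
    rw [two_mul, Finset.prod_range_add, ← Finset.prod_range_reflect
      (fun x => 1 - (ζ ^ 2) ^ (n + x + 1)) n, ← Finset.prod_mul_distrib] at h1
    have h2 : ∀ k ∈ Finset.range n, (1 - (ζ ^ 2) ^ (k + 1)) *
        (1 - (ζ ^ 2) ^ (n + (n - 1 - k) + 1)) = -1 * (ζ ^ (k + 1) - ζ ^ (p - 1 - k)) ^ 2 := by
      intro k hk
      rw [Finset.mem_range] at hk
      have h3 : n + (n - 1 - k) + 1 = p - 1 - k := by omega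
      have h4 : ζ ^ (k + 1) * ζ ^ (p - 1 - k) = 1 := by
        rw [← pow_add, show (k + 1) + (p - 1 - k) = p by omega, hprim.pow_eq_one]
      rw [h3, ← pow_mul, ← pow_mul, mul_comm 2, mul_comm 2, pow_mul, pow_mul]
      linear_combination (ζ ^ (k + 1) * ζ ^ (p - 1 - k) - 1) * h4
    rw [Finset.prod_congr rfl h2, Finset.prod_mul_distrib, Finset.prod_const, Finset.card_range,
      hn2.neg_one_pow, one_mul, Finset.prod_pow] at h1
    rw [h1, hn]; push_cast; ring
  rw [hdiv, hP]
  have hS2 : S ^ 2 = p := by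
    rw [hP, neg_sq] at hsq
    exact_mod_cast hsq
  rw [← hS2, Real.sqrt_sq hSpos.le]

/-- Gauss's determination of the sign of the quadratic Gauss sum, for `p ≡ 5 (mod 8)`. The square
of the sum is `p`, so it is `√p` or `-√p`, and the second value is excluded by `gauss_ne_prod`. -/
lemma gaussSum_qchar_zmod (hp : p % 8 = 5) :
    gaussSum (qchar (ZMod p)) (ZMod.stdAddChar (N := p)) = ((Real.sqrt p : ℝ) : ℂ) := by
  classical
  have hpp := (Fact.out : p.Prime)
  have hc : ringChar (ZMod p) ≠ 2 := by rw [ZMod.ringChar_zmod_n]; omega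
  set ζ : ℂ := Complex.exp (2 * Real.pi * Complex.I / p) with hζ
  have hprim : IsPrimitiveRoot ζ p := Complex.isPrimitiveRoot_exp p hpp.ne_zero
  have hG : gaussSum (qchar (ZMod p)) (ZMod.stdAddChar (N := p)) =
      ∑ j ∈ Finset.range p, ((quadraticChar (ZMod p) j : ℤ) : ℂ) * ζ ^ j := by
    rw [gaussSum, eq_comm]
    refine Finset.sum_bij' (fun j _ => (j : ZMod p)) (fun x _ => x.val) (by simp)
      (fun x _ => Finset.mem_range.mpr (ZMod.val_lt x)) ?_ (by simp) ?_
    · intro j hj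
      exact ZMod.val_cast_of_lt (Finset.mem_range.mp hj)
    · intro j hj
      rw [qchar_apply]
      have h1 := ZMod.stdAddChar_coe (N := p) (j : ℤ)
      push_cast at h1
      rw [h1, hζ, ← Complex.exp_nat_mul]
      rw [show (j : ℂ) * (2 * Real.pi * Complex.I / p) = 2 * Real.pi * Complex.I * j / p by ring]
      congr!
  have h2 := gaussSum_sq (qchar_ne_one hc) (qchar_isQuadratic (F := ZMod p))
    (ZMod.isPrimitive_stdAddChar p)
  have h3 : qchar (ZMod p) (-1) = 1 := by
    refine qchar_eq_one (by simp) ?_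
    rw [FiniteField.isSquare_neg_one_iff, ZMod.card]; omega
  rw [h3, one_mul, ZMod.card] at h2
  have h4 : (((Real.sqrt p : ℝ) : ℂ)) ^ 2 = p := by
    rw [← Complex.ofReal_pow, Real.sq_sqrt (Nat.cast_nonneg p)]; simp
  rcases sq_eq_sq_iff_eq_or_eq_neg.mp (h2.trans h4.symm) with h | h
  · exact h
  · exfalso
    rw [hG, ← prod_eq_neg_sqrt p hp hζ] at h
    exact gauss_ne_prod p hp hprim (by convert h)

end

/-! ### Quadratic Gauss sums in odd degree -/

lemma odd_pow_mod_eight {p : ℕ} (hp : p % 8 = 5) {t : ℕ} (ht : Odd t) : p ^ t % 8 = 5 := by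
  obtain ⟨u, rfl⟩ := ht
  rw [pow_succ, pow_mul, Nat.mul_mod, Nat.pow_mod (p ^ 2), Nat.pow_mod p, hp]
  simp

lemma addChar_map_sum {A ι : Type*} [AddCommMonoid A] (ψ : AddChar A ℂ) (s : Finset ι) (f : ι → A) :
    ψ (∑ i ∈ s, f i) = ∏ i ∈ s, ψ (f i) := by
  classical
  induction s using Finset.induction_on with
  | empty => simp
  | insert i s hi ih => rw [Finset.sum_insert hi, Finset.prod_insert hi, AddChar.map_add_eq_mul, ih]

/-- The exponential sum of a one-dimensional quadratic form `a u²`. -/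
lemma sum_char_mul_sq {F : Type*} [Field F] [Fintype F] (hF : ringChar F ≠ 2) {ψ : AddChar F ℂ}
    (hψ : ψ.IsPrimitive) {a : F} (ha : a ≠ 0) :
    ∑ u, ψ (a * u ^ 2) = qchar F a * gaussSum (qchar F) ψ := by
  have h1 := sum_comp_sq hF (fun v => ψ (a * v))
  rw [h1]
  simp only [add_mul, one_mul, Finset.sum_add_distrib]
  have h2 : ∑ v, ψ (a * v) = 0 := by
    have := AddChar.sum_eq_zero_of_ne_one (hψ ha)
    simpa only [AddChar.mulShift_apply] using this
  have h3 := gaussSum_mulShift (qchar F) ψ (Units.mk0 a ha)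
  have h4 : qchar F a * qchar F a = 1 := by
    rw [← map_mul, ← sq, qchar_sq a ha]
  rw [h2, zero_add, ← h3, Units.val_mk0, ← mul_assoc, h4, one_mul]
  rfl

section
variable (p : ℕ) [Fact p.Prime] (F : Type*) [Field F] [Fintype F] [Algebra (ZMod p) F]

/-- Diagonalising the trace form expresses the quadratic Gauss sum of `F` through that of the
prime field, up to the quadratic character of the discriminant, which is a square in `F`. -/
lemma gaussSum_qchar_eq_pow (hp : p ≠ 2) :
    ∃ d : ZMod p, d ≠ 0 ∧ IsSquare (algebraMap (ZMod p) F d) ∧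
      gaussSum (qchar F) (trChar p F) = qchar (ZMod p) d *
        gaussSum (qchar (ZMod p)) (ZMod.stdAddChar (N := p)) ^ Module.finrank (ZMod p) F := by
  classical
  have hc : ringChar (ZMod p) ≠ 2 := by rwa [ZMod.ringChar_zmod_n]
  have : CharP F p := charP_of_injective_algebraMap (algebraMap (ZMod p) F).injective p
  have hcF : ringChar F ≠ 2 := by rwa [ringChar.eq F p]
  have : Invertible (2 : ZMod p) := invertibleOfNonzero (Ring.two_ne_zero hc)
  obtain ⟨v, hv⟩ := LinearMap.BilinForm.exists_orthogonal_basis (K := ZMod p) (V := F)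
    (B := Algebra.traceForm (ZMod p) F)
    ⟨fun x y => by simp [Algebra.traceForm_apply, mul_comm]⟩
  set a : Fin (Module.finrank (ZMod p) F) → ZMod p :=
    fun i => Algebra.trace (ZMod p) F (v i * v i) with ha
  have hortho : ∀ i j, i ≠ j → Algebra.trace (ZMod p) F (v i * v j) = 0 := fun i j h => hv h
  have ha0 : ∀ i, a i ≠ 0 := fun i =>
    hv.not_isOrtho_basis_self_of_separatingLeft (traceForm_nondegenerate (ZMod p) F).1 i
  refine ⟨∏ i, a i, Finset.prod_ne_zero_iff.mpr fun i _ => ha0 i, ?_, ?_⟩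
  -- the discriminant of the trace form is `det M ^ 2` for the matrix `M` of conjugates
  · set M : Matrix (Fin (Module.finrank (ZMod p) F)) (Fin (Module.finrank (ZMod p) F)) F :=
      Matrix.of fun i j => v j ^ p ^ (i : ℕ) with hM
    have hMM : M.transpose * M = Matrix.diagonal fun i => algebraMap (ZMod p) F (a i) := by
      ext i j
      have h1 := FiniteField.algebraMap_trace_eq_sum_pow (ZMod p) F (v i * v j)
      rw [Finset.sum_range, Nat.card_zmod] at h1
      simp only [mul_pow] at h1
      have h2 : (M.transpose * M) i j = algebraMap (ZMod p) F (Algebra.trace (ZMod p) F (v i * v j)) := by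
        rw [h1, Matrix.mul_apply]; rfl
      rw [h2]
      by_cases hij : i = j
      · subst hij; rw [Matrix.diagonal_apply_eq]
      · rw [Matrix.diagonal_apply_ne _ hij, hortho i j hij, map_zero]
    refine ⟨M.det, ?_⟩
    have h3 := congrArg Matrix.det hMM
    rw [Matrix.det_mul, Matrix.det_transpose, Matrix.det_diagonal] at h3
    rw [map_prod, h3]
  · have h1 : gaussSum (qchar F) (trChar p F) = ∑ x : F, trChar p F (x ^ 2) := by
      have := sum_char_mul_sq hcF (trChar_isPrimitive p F) one_ne_zero
      simpa using this.symm
    rw [h1, ← v.equivFun.symm.toEquiv.sum_comp]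
    have h2 : ∀ c : Fin (Module.finrank (ZMod p) F) → ZMod p,
        trChar p F ((v.equivFun.symm.toEquiv c) ^ 2) =
          ∏ i, ZMod.stdAddChar (a i * c i ^ 2) := by
      intro c
      rw [trChar_apply]
      have h3 : Algebra.trace (ZMod p) F ((v.equivFun.symm.toEquiv c) ^ 2) =
          ∑ i, a i * c i ^ 2 := by
        have h4 : v.equivFun.symm.toEquiv c = ∑ i, c i • v i := v.equivFun_symm_apply c
        rw [h4, sq, Finset.sum_mul_sum, map_sum]
        refine Finset.sum_congr rfl fun i _ => ?_
        rw [map_sum, Finset.sum_eq_single i]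
        · rw [smul_mul_smul_comm, map_smul, smul_eq_mul, ha]; ring
        · intro j _ hj
          rw [smul_mul_smul_comm, map_smul, hortho i j hj.symm, smul_zero]
        · simp
      rw [h3]
      exact addChar_map_sum _ _ _
    rw [Finset.sum_congr rfl fun c _ => h2 c, ← Fintype.piFinset_univ,
      ← Finset.prod_univ_sum (fun _ => Finset.univ) fun i c => ZMod.stdAddChar (a i * c ^ 2),
      Finset.prod_congr rfl fun i _ =>
        sum_char_mul_sq hc (ZMod.isPrimitive_stdAddChar p) (ha0 i), Finset.prod_mul_distrib, map_prod]
    simp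

/-- For `p ≡ 5 (mod 8)` and odd degree, the quadratic Gauss sum is the positive square root of `q`.
In odd degree an element of the prime field that is a square in `F` is already a square in the
prime field, so the discriminant contributes `1`. -/
lemma gaussSum_qchar_odd (hp : p % 8 = 5) {t : ℕ} (ht : Odd t) (hcard : Fintype.card F = p ^ t) :
    gaussSum (qchar F) (trChar p F) = ((Real.sqrt (p ^ t : ℝ) : ℝ) : ℂ) := by
  have hpp := (Fact.out : p.Prime)
  obtain ⟨d, hd, hsq, h⟩ := gaussSum_qchar_eq_pow p F (by omega)
  have hfin : Module.finrank (ZMod p) F = t := by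
    have h1 := Module.card_eq_pow_finrank (K := ZMod p) (V := F)
    rw [hcard, ZMod.card] at h1
    exact (Nat.pow_right_injective hpp.two_le h1).symm
  have hc : ringChar (ZMod p) ≠ 2 := by rw [ZMod.ringChar_zmod_n]; omega
  have : CharP F p := charP_of_injective_algebraMap (algebraMap (ZMod p) F).injective p
  have hcF : ringChar F ≠ 2 := by rw [ringChar.eq F p]; omega
  have hdsq : IsSquare d := by
    by_contra hns
    have h1 := (FiniteField.pow_dichotomy hc hd).resolve_left
      (fun h => hns ((FiniteField.isSquare_iff hc hd).mpr h))
    have h2 := (FiniteField.isSquare_iff hcF (by simpa using hd)).mp hsq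
    rw [ZMod.card] at h1
    obtain ⟨k, hk⟩ : ∃ k, p ^ t = (p - 1) * k + 1 := by
      obtain ⟨k, hk⟩ := Nat.sub_dvd_pow_sub_pow p 1 t
      refine ⟨k, ?_⟩
      rw [one_pow] at hk
      have := Nat.one_le_pow t p hpp.pos
      omega
    have h8 := odd_pow_mod_eight hp ht
    have hk1 : Odd k := by
      rw [Nat.odd_iff]
      by_contra hk2
      obtain ⟨j, rfl⟩ : ∃ j, k = 2 * j := ⟨k / 2, by omega⟩
      obtain ⟨i, hi⟩ : ∃ i, p - 1 = 4 * i := ⟨(p - 1) / 4, by omega⟩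
      rw [hi, show 4 * i * (2 * j) = 8 * (i * j) by ring] at hk
      omega
    have hhalf : Fintype.card F / 2 = p / 2 * k := by
      rw [hcard, hk]
      have : (p - 1) * k = 2 * (p / 2 * k) := by
        rw [← mul_assoc]; congr 1; omega
      omega
    rw [hhalf, pow_mul, ← map_pow, h1, map_neg, map_one, hk1.neg_one_pow] at h2
    exact Ring.neg_one_ne_one_of_char_ne_two hcF h2
  rw [h, hfin, gaussSum_qchar_zmod p hp, qchar_eq_one hd hdsq, one_mul, ← Complex.ofReal_pow]
  congr 1
  refine ((Real.sqrt_eq_iff_mul_self_eq (by positivity) (pow_nonneg (Real.sqrt_nonneg _) t)).mpr ?_).symm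
  rw [← sq, ← pow_mul, mul_comm, pow_mul, Real.sq_sqrt (Nat.cast_nonneg p)]
end

/-! ### Quartic characters in odd degree -/

/-- Uniqueness of the normalised representation as a sum of two squares. -/
lemma sum_two_squares_unique {p : ℕ} [Fact p.Prime] (hp2 : p ≠ 2) {t : ℕ} {a b c d : ℤ}
    (hab : (p : ℤ) ^ t = a ^ 2 + b ^ 2) (hcd : (p : ℤ) ^ t = c ^ 2 + d ^ 2)
    (ha : a % 4 = 3) (hc : c % 4 = 3) (hpa : ¬ (p : ℤ) ∣ a) (hpc : ¬ (p : ℤ) ∣ c) : a = c := by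
  have hpp := (Fact.out : p.Prime)
  have hpi : Prime (p : ℤ) := Nat.prime_iff_prime_int.mp hpp
  have hodd : ((p : ℤ) ^ t) % 2 = 1 := by
    have : Odd (p ^ t) := (hpp.odd_of_ne_two hp2).pow
    rw [Nat.odd_iff] at this
    exact_mod_cast congrArg (Nat.cast : ℕ → ℤ) this
  have hN0 : ((p : ℤ) ^ t) ≠ 0 := pow_ne_zero _ hpi.ne_zero
  -- the sign of `d` is immaterial, so assume that `p` does not divide `a * c - b * d`
  have key : ∀ d : ℤ, (p : ℤ) ^ t = c ^ 2 + d ^ 2 → ¬ (p : ℤ) ∣ a * c - b * d → a = c := by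
    intro d hcd hnd
    set N := (p : ℤ) ^ t with hN
    have hdvd : N ∣ (a * c - b * d) * (a * c + b * d) := by
      refine ⟨a ^ 2 + c ^ 2 - N, ?_⟩
      linear_combination (N - c ^ 2) * hab + b ^ 2 * hcd
    have hcop : IsCoprime N (a * c - b * d) :=
      IsCoprime.pow_left ((Prime.coprime_iff_not_dvd hpi).mpr hnd)
    obtain ⟨k, hk⟩ := hcop.dvd_of_dvd_mul_left hdvd
    have hy : (a * c + b * d) ^ 2 + (a * d - b * c) ^ 2 = N ^ 2 := by
      linear_combination (-c ^ 2 - d ^ 2) * hab - N * hcd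
    have hk2 : k ^ 2 ≤ 1 := by
      have h1 : N ^ 2 * k ^ 2 ≤ N ^ 2 * 1 := by
        rw [hk] at hy
        nlinarith [sq_nonneg (a * d - b * c)]
      exact le_of_mul_le_mul_left h1 (by positivity)
    have hk3 : k = 0 ∨ k = 1 ∨ k = -1 := by
      have : -1 ≤ k := by nlinarith
      have : k ≤ 1 := by nlinarith
      omega
    have hcx : a * N = c * (a * c + b * d) + d * (a * d - b * c) := by
      linear_combination a * hcd
    rcases hk3 with rfl | hk3
    · exfalso
      rw [hk] at hy hcx
      have hy2 : (a * d - b * c) ^ 2 = N ^ 2 := by linear_combination hy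
      have had : a ^ 2 = d ^ 2 := by
        have h1 : (N ^ 2) * a ^ 2 = N ^ 2 * d ^ 2 := by
          linear_combination (a * N + d * (a * d - b * c)) * hcx + d ^ 2 * hy2
        exact mul_left_cancel₀ (pow_ne_zero 2 hN0) h1
      have e : N = c ^ 2 + a ^ 2 := by rw [had]; exact hcd
      have h1 : a ^ 2 % 2 = 1 := by
        rw [Int.emod_emod_of_dvd _ (by norm_num : (2 : ℤ) ∣ 2) |>.symm, pow_two, Int.mul_emod]
        have : a % 2 = 1 := by omega
        rw [this]; norm_num
      have h2 : c ^ 2 % 2 = 1 := by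
        rw [pow_two, Int.mul_emod]
        have : c % 2 = 1 := by omega
        rw [this]; norm_num
      omega
    · have hk4 : k ^ 2 = 1 := by rcases hk3 with rfl | rfl <;> norm_num
      rw [hk] at hy hcx
      have hy0 : a * d - b * c = 0 := by
        have : (a * d - b * c) ^ 2 = 0 := by linear_combination hy - N ^ 2 * hk4
        exact pow_eq_zero_iff two_ne_zero |>.mp this
      rw [hy0] at hcx
      have h5 : a = c * k := mul_right_cancel₀ hN0 (by linear_combination hcx)
      rcases hk3 with rfl | rfl
      · linarith
      · omega
  by_cases h : (p : ℤ) ∣ a * c - b * d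
  · refine key (-d) (by rw [hcd]; ring) fun h2 => ?_
    have h3 : (p : ℤ) ∣ 2 * (a * c) := by
      have := dvd_add h h2
      ring_nf at this ⊢
      exact this
    rcases hpi.dvd_or_dvd h3 with h4 | h4
    · have h5 : p ∣ 2 := by exact_mod_cast h4
      exact hp2 ((Nat.prime_dvd_prime_iff_eq hpp Nat.prime_two).mp h5)
    · exact (hpi.dvd_or_dvd h4).elim hpa hpc
  · exact key d hcd h

/-- No carries occur when adding `u` and `2u` in base `p`, where `u = (p ^ t - 1) / 4`. -/
lemma not_dvd_choose {p : ℕ} [Fact p.Prime] (hp : p % 4 = 1) (t : ℕ) (u : ℕ)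
    (hu : 4 * u + 1 = p ^ t) : ¬ p ∣ (3 * u).choose u := by
  have hpp := (Fact.out : p.Prime)
  induction t generalizing u with
  | zero =>
    have : u = 0 := by simpa using hu
    subst this
    simpa using hpp.ne_one
  | succ t ih =>
    obtain ⟨e, he⟩ : ∃ e, p = 4 * e + 1 := ⟨p / 4, by omega⟩
    obtain ⟨v, hv⟩ : ∃ v, 4 * v + 1 = p ^ t := by
      have : p ^ t % 4 = 1 := by rw [Nat.pow_mod, hp]; simp
      exact ⟨p ^ t / 4, by omega⟩
    have huv : u = e + p * v := by
      have h1 : 4 * u + 1 = (4 * v + 1) * p := by rw [hu, pow_succ, hv]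
      nlinarith
    have h3 : 3 * u = 3 * e + p * (3 * v) := by rw [huv]; ring
    intro hd
    have hl := (Nat.modEq_zero_iff_dvd.mpr hd).symm.trans
      (Choose.choose_modEq_choose_mod_mul_choose_div_nat (p := p) (n := 3 * u) (k := u))
    have e1 : e < p := by omega
    have e2 : 3 * e < p := by omega
    rw [h3, huv, Nat.add_mul_mod_self_left, Nat.add_mul_mod_self_left,
      Nat.add_mul_div_left _ _ hpp.pos, Nat.add_mul_div_left _ _ hpp.pos, Nat.mod_eq_of_lt e1,
      Nat.mod_eq_of_lt e2, Nat.div_eq_of_lt e1, Nat.div_eq_of_lt e2, zero_add, zero_add] at hl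
    rcases hpp.dvd_mul.mp (Nat.modEq_zero_iff_dvd.mp hl.symm) with h | h
    · have h5 := Nat.choose_mul_factorial_mul_factorial (show e ≤ 3 * e by omega)
      have h6 : p ∣ (3 * e).factorial := by
        rw [← h5, mul_assoc]; exact h.mul_right _
      rw [hpp.dvd_factorial] at h6
      omega
    · exact ih v hv h

/-- The reduction of the Jacobi sum to the characteristic: in the binomial expansion only the
exponent `4u = q - 1` contributes. -/
lemma sum_pow_mul_one_sub_pow {F : Type*} [Field F] [Fintype F] {u : ℕ}
    (hu : 4 * u + 1 = Fintype.card F) (hu0 : 0 < u) :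
    ∑ x : F, x ^ (3 * u) * (1 - x) ^ (3 * u) = -((-1) ^ u * ((3 * u).choose u : F)) := by
  classical
  have hpow : ∀ n, 0 < n → ∑ x : F, x ^ n = if Fintype.card F - 1 ∣ n then -1 else 0 := by
    intro n hn
    rw [← FiniteField.sum_pow_units]
    rw [← Finset.sum_subset (Finset.subset_univ (Finset.univ.filter fun x : F => x ≠ 0))]
    · refine (Finset.sum_bij' (fun (x : Fˣ) _ => (x : F))
        (fun x hx => Units.mk0 x (by simpa using hx)) (by simp) (by simp) (by simp) (by simp)
        (by simp)).symm
    · intro x _ hx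
      have : x = 0 := by simpa using hx
      rw [this, zero_pow hn.ne']
  have hexp : ∀ x : F, x ^ (3 * u) * (1 - x) ^ (3 * u) =
      ∑ j ∈ Finset.range (3 * u + 1), ((-1) ^ j * ((3 * u).choose j : F)) * x ^ (3 * u + j) := by
    intro x
    rw [show 1 - x = -x + 1 by ring, add_pow, Finset.mul_sum]
    refine Finset.sum_congr rfl fun j _ => ?_
    rw [neg_pow, one_pow, pow_add]; ring
  rw [Finset.sum_congr rfl fun x _ => hexp x, Finset.sum_comm, Finset.sum_eq_single u]
  · rw [← Finset.mul_sum, hpow _ (by omega), if_pos ⟨1, by omega⟩]; ring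
  · intro j hj hju
    rw [Finset.mem_range] at hj
    rw [← Finset.mul_sum, hpow _ (by omega), if_neg, mul_zero]
    rintro ⟨k, hk⟩
    rw [show Fintype.card F - 1 = 4 * u by omega] at hk
    have h1 : 0 < k := by rcases k with _ | k <;> omega
    have h2 : k < 2 := by
      by_contra h
      have : 4 * u * 2 ≤ 4 * u * k := Nat.mul_le_mul_left _ (by omega)
      omega
    have : k = 1 := by omega
    subst this; omega
  · intro h; exact absurd (Finset.mem_range.mpr (by omega)) h

/-- A quartic character lifts to the Gaussian integers, and there is a ring homomorphism from the
Gaussian integers to `F` under which the lift reduces to the power map `x ↦ x ^ (3u)`, where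
`u = (q - 1) / 4`. -/
lemma exists_quartic_lift {F : Type*} [Field F] [Fintype F]
    {lam : MulChar F ℂ} (h4 : lam ^ 2 = qchar F) {u : ℕ} (hu : 4 * u + 1 = Fintype.card F)
    (hu0 : 0 < u) :
    ∃ (L : F → GaussianInt) (φ : GaussianInt →+* F),
      (∀ x, GaussianInt.toComplex (L x) = lam x) ∧ ∀ x, φ (L x) = x ^ (3 * u) := by
  classical
  obtain ⟨g, hg⟩ := IsCyclic.exists_generator (α := Fˣ)
  have hgord : orderOf g = 4 * u := by
    rw [orderOf_eq_card_of_forall_mem_zpowers hg, Nat.card_eq_fintype_card, Fintype.card_units, ← hu]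
    omega
  have hgns : qchar F (g : F) = -1 := by
    apply qchar_eq_neg_one
    rintro ⟨y, hy⟩
    have hy0 : y ≠ 0 := by rintro rfl; simp at hy
    have h1 : (g : F) ^ (2 * u) = 1 := by
      rw [hy, ← sq, ← pow_mul, show 2 * (2 * u) = Fintype.card F - 1 by omega,
        FiniteField.pow_card_sub_one_eq_one y hy0]
    have h2 : g ^ (2 * u) = 1 := by ext; simpa using h1
    have h3 := Nat.le_of_dvd (by omega) (orderOf_dvd_of_pow_eq_one h2)
    omega
  have hlg : (lam g) ^ 2 = -1 := by
    rw [← MulChar.pow_apply' _ two_ne_zero, h4, hgns]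
  obtain ⟨ε, hε, hlgε⟩ : ∃ ε : ℤ, ε * ε = 1 ∧
      lam g = GaussianInt.toComplex ⟨0, ε⟩ := by
    rcases sq_eq_sq_iff_eq_or_eq_neg.mp (hlg.trans Complex.I_sq.symm) with h | h
    · exact ⟨1, by norm_num, by rw [h, GaussianInt.toComplex_def]; simp⟩
    · exact ⟨-1, by norm_num, by rw [h, GaussianInt.toComplex_def]; simp⟩
  have hg2 : (g : F) ^ (2 * u) = -1 := by
    have h1 : ((g : F) ^ (2 * u)) ^ 2 = 1 := by
      rw [← pow_mul, show 2 * u * 2 = Fintype.card F - 1 by omega,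
        FiniteField.pow_card_sub_one_eq_one _ g.ne_zero]
    refine (sq_eq_sq_iff_eq_or_eq_neg.mp (h1.trans (one_pow 2).symm)).resolve_left fun h2 => ?_
    have h2 : g ^ (2 * u) = 1 := by ext; simpa using h2
    have h3 := Nat.le_of_dvd (by omega) (orderOf_dvd_of_pow_eq_one h2)
    omega
  set w : F := (g : F) ^ (3 * u) with hw
  have hww : w * w = -1 := by
    rw [hw, ← pow_add, show 3 * u + 3 * u = (2 * u) * 3 by ring, pow_mul, hg2]; norm_num
  set φ : GaussianInt →+* F := Zsqrtd.lift ⟨ε * w, by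
    have : ((ε : F)) * ε = 1 := by exact_mod_cast congrArg (Int.cast : ℤ → F) hε
    push_cast
    linear_combination (w * w) * this + hww⟩ with hφ
  have hφg : φ ⟨0, ε⟩ = w := by
    have : ((ε : F)) * ε = 1 := by exact_mod_cast congrArg (Int.cast : ℤ → F) hε
    rw [hφ, Zsqrtd.lift_apply_apply]
    push_cast
    linear_combination w * this
  have hex : ∀ x : F, ∃ z : GaussianInt, GaussianInt.toComplex z = lam x ∧ φ z = x ^ (3 * u) := by
    intro x
    by_cases hx : x = 0
    · subst hx
      exact ⟨0, by rw [map_zero, MulChar.map_zero], by rw [map_zero, zero_pow (by omega)]⟩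
    · obtain ⟨n, hn⟩ := (mem_powers_iff_mem_zpowers.mpr (hg (Units.mk0 x hx)))
      have hn2 : (g : F) ^ n = x := by
        have := congrArg (Units.val) hn
        simpa using this
      refine ⟨⟨0, ε⟩ ^ n, ?_, ?_⟩
      · rw [map_pow, ← hlgε, ← map_pow, hn2]
      · rw [map_pow, hφg, ← hn2, hw, ← pow_mul, ← pow_mul, mul_comm]
  choose L hL using hex
  exact ⟨L, φ, fun x => (hL x).1, fun x => (hL x).2⟩

/-- The quartic Jacobi sum `J(λ, λ) = a + b i` over a field with `q ≡ 5 (mod 8)` elements: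
`a ≡ -1 (mod 4)` and `p` does not divide `a`. The congruence comes from `2 + 2i ∣ q - J(λ, λ)`, the
non-divisibility from reducing `J(λ, λ)` to `F`. -/
lemma jacobiSum_quartic {F : Type*} [Field F] [Fintype F] {p t : ℕ} [Fact p.Prime] [CharP F p]
    (hp : p % 8 = 5) (ht : Odd t) (hcard : Fintype.card F = p ^ t)
    {lam : MulChar F ℂ} (h4 : lam ^ 2 = qchar F) :
    ∃ a b : ℤ, jacobiSum lam lam = a + b * Complex.I ∧ (p : ℤ) ^ t = a ^ 2 + b ^ 2 ∧
      a % 4 = 3 ∧ ¬ (p : ℤ) ∣ a := by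
  classical
  have hpp := (Fact.out : p.Prime)
  have hF : ringChar F ≠ 2 := by rw [ringChar.eq F p]; omega
  have h8 := odd_pow_mod_eight hp ht
  obtain ⟨u, hu⟩ : ∃ u, 4 * u + 1 = Fintype.card F := ⟨p ^ t / 4, by omega⟩
  have hu0 : 0 < u := by omega
  have hlam1 : lam ≠ 1 := by
    rintro rfl; rw [one_pow] at h4; exact qchar_ne_one hF h4.symm
  obtain ⟨L, φ, hL, hφ⟩ := exists_quartic_lift h4 hu hu0
  set J : GaussianInt := ∑ x, L x * L (1 - x) with hJ
  have hJc : GaussianInt.toComplex J = jacobiSum lam lam := by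
    rw [hJ, map_sum, jacobiSum]
    simp only [map_mul, hL]
  have hnorm : ((p ^ t : ℕ) : ℤ) = J.re ^ 2 + J.im ^ 2 := by
    have h1 := jacobiSum_mul_jacobiSum_inv (F := F) (F' := ℂ) (by
      rw [ringChar.eq F p, ringChar.eq ℂ 0]; exact hpp.ne_zero.symm) hlam1 hlam1
      (by rw [← sq, h4]; exact qchar_ne_one hF)
    have h2 : jacobiSum lam⁻¹ lam⁻¹ = star (jacobiSum lam lam) := by
      rw [jacobiSum, jacobiSum, star_sum]
      simp only [star_mul', MulChar.star_apply']
    rw [h2, ← hJc, hcard, GaussianInt.toComplex_def] at h1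
    have h3 : ((p ^ t : ℕ) : ℂ) = J.re ^ 2 + J.im ^ 2 := by
      have h5 : star ((J.re : ℂ) + J.im * Complex.I) = J.re - J.im * Complex.I := by
        rw [← starRingEnd_apply, map_add, map_mul, map_intCast, map_intCast, Complex.conj_I]; ring
      rw [h5] at h1
      linear_combination -h1 - (J.im : ℂ) ^ 2 * Complex.I_sq
    exact_mod_cast h3
  have hcong : (⟨2, 2⟩ : GaussianInt) ∣ (p ^ t : ℕ) - J := by
    have hlam2 : lam 4 = -1 := by
      have h1 : (4 : F) = 2 ^ 2 := by norm_num
      rw [h1, map_pow, ← MulChar.pow_apply' _ two_ne_zero, h4]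
      apply qchar_eq_neg_one
      rw [FiniteField.isSquare_two_iff, hcard]
      omega
    have hJ2 : ∑ x, L x * ((quadraticChar F (1 - x) : ℤ) : GaussianInt) = -J := by
      apply GaussianInt.toComplex_injective
      have h1 := jacobiSum_self hF hlam1
      rw [hlam2, ← hJc, jacobiSum] at h1
      rw [map_neg, map_sum]
      simp only [map_mul, hL, map_intCast]
      rw [neg_one_mul] at h1
      exact h1.symm
    have hL0 : ∑ x, L x = 0 := by
      apply GaussianInt.toComplex_injective
      rw [map_sum, map_zero]
      simp only [hL]
      exact MulChar.sum_eq_zero_of_ne_one hlam1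
    have hχ0 : ∑ x : F, ((quadraticChar F (1 - x) : ℤ) : GaussianInt) = 0 := by
      have h1 := (Equiv.subLeft (1 : F)).sum_comp (fun x => quadraticChar F x)
      simp only [Equiv.subLeft_apply] at h1
      rw [← Int.cast_sum, h1, quadraticChar_sum_zero hF, Int.cast_zero]
    -- every term of this sum is a multiple of `(1 + i) * 2`
    have hsum : ((p ^ t : ℕ) : GaussianInt) - J =
        ∑ x, (L x - 1) * (((quadraticChar F (1 - x) : ℤ) : GaussianInt) - 1) := by
      have h1 : ∀ x : F, (L x - 1) * (((quadraticChar F (1 - x) : ℤ) : GaussianInt) - 1) =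
          L x * ((quadraticChar F (1 - x) : ℤ) : GaussianInt) - L x -
            ((quadraticChar F (1 - x) : ℤ) : GaussianInt) + 1 := fun x => by ring
      rw [Finset.sum_congr rfl fun x _ => h1 x, Finset.sum_add_distrib, Finset.sum_sub_distrib,
        Finset.sum_sub_distrib, hJ2, hL0, hχ0, ← hcard]
      simp
      ring
    rw [hsum]
    refine Finset.dvd_sum fun x _ => ?_
    by_cases hx0 : x = 0
    · subst hx0; simp
    by_cases hx1 : 1 - x = 0
    · have : L x = 1 := by
        apply GaussianInt.toComplex_injective
        rw [hL, ← sub_eq_zero.mp hx1, map_one, map_one]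
      rw [this, sub_self, zero_mul]; exact dvd_zero _
    have hpow : (L x) ^ 4 = 1 := by
      apply GaussianInt.toComplex_injective
      rw [map_pow, hL, map_one, show 4 = 2 * 2 by norm_num, pow_mul,
        ← MulChar.pow_apply' _ two_ne_zero, h4, ← map_pow, qchar_sq x hx0]
    have hn1 : (L x).re * (L x).re + (L x).im * (L x).im = 1 := by
      have h1 := congrArg Zsqrtd.normMonoidHom hpow
      rw [map_pow, map_one] at h1
      have h2 : 0 ≤ Zsqrtd.norm (L x) := GaussianInt.norm_nonneg _
      have h3 := (pow_eq_one_iff_of_nonneg h2 (by norm_num)).mp h1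
      rw [Zsqrtd.norm_def] at h3
      linarith
    have hodd : ∃ c, (L x).re + (L x).im - 1 = 2 * c := by
      have h1 : ((L x).re + (L x).im) * ((L x).re + (L x).im) = 1 + 2 * ((L x).re * (L x).im) := by
        linear_combination hn1
      have h2 : Odd (((L x).re + (L x).im) * ((L x).re + (L x).im)) := by
        rw [h1]; exact ⟨(L x).re * (L x).im, by ring⟩
      obtain ⟨c, hc⟩ := (Int.odd_mul.mp h2).1
      exact ⟨c, by rw [hc]; ring⟩
    obtain ⟨c, hc⟩ := hodd
    have hL1 : L x - 1 = ⟨1, 1⟩ * ⟨c, c - (L x).re + 1⟩ := by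
      apply Zsqrtd.ext
      · simp; ring
      · simp; linarith
    rcases quadraticChar_dichotomy hx1 with h | h
    · rw [h]; simp
    · rw [h, hL1]
      refine ⟨⟨c, c - (L x).re + 1⟩ * (-1), ?_⟩
      have : (⟨2, 2⟩ : GaussianInt) = ⟨1, 1⟩ * 2 := by
        apply Zsqrtd.ext <;> simp
      rw [this]; push_cast; ring
  have hpa : ¬ (p : ℤ) ∣ J.re := by
    intro hd
    have hd2 : (p : ℤ) ∣ J.im := by
      have h1 : (p : ℤ) ∣ J.im ^ 2 := by
        have h2 : (p : ℤ) ∣ ((p ^ t : ℕ) : ℤ) := by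
          push_cast; exact dvd_pow_self _ (by rintro rfl; simp at ht)
        have h3 : J.im ^ 2 = ((p ^ t : ℕ) : ℤ) - J.re * J.re := by rw [hnorm]; ring
        rw [h3]; exact dvd_sub h2 (hd.mul_right _)
      exact (Nat.prime_iff_prime_int.mp hpp).dvd_of_dvd_pow h1
    have hφJ : φ J = 0 := by
      obtain ⟨c, hc⟩ := hd
      obtain ⟨d, hd⟩ := hd2
      have : J = (p : GaussianInt) * ⟨c, d⟩ := by
        apply Zsqrtd.ext
        · simp [hc]
        · simp [hd]
      rw [this, map_mul, map_natCast, CharP.cast_eq_zero, zero_mul]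
    rw [hJ, map_sum] at hφJ
    simp only [map_mul, hφ] at hφJ
    rw [sum_pow_mul_one_sub_pow hu hu0, neg_eq_zero] at hφJ
    have h5 := (mul_eq_zero.mp hφJ).resolve_left (pow_ne_zero _ (by simp))
    rw [CharP.cast_eq_zero_iff F p] at h5
    exact not_dvd_choose (by omega) t u (by omega) h5
  refine ⟨J.re, J.im, by rw [← hJc, GaussianInt.toComplex_def], by exact_mod_cast hnorm, ?_, hpa⟩
  obtain ⟨⟨c, d⟩, hk⟩ := hcong
  have hre : ((p ^ t : ℕ) : ℤ) - J.re = 2 * c - 2 * d := by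
    have := congrArg Zsqrtd.re hk
    simp only [Zsqrtd.re_sub, Zsqrtd.re_mul, Zsqrtd.re_natCast] at this
    linarith
  have him : - J.im = 2 * d + 2 * c := by
    have := congrArg Zsqrtd.im hk
    simp only [Zsqrtd.im_sub, Zsqrtd.im_mul, Zsqrtd.im_natCast] at this
    linarith
  -- `a` is odd and `b = -2 (c + d)`, so `a ^ 2 + b ^ 2 ≡ 5 (mod 8)` forces `c + d` to be odd
  generalize p ^ t = q at *
  generalize J.re = a at *
  generalize J.im = b at *
  obtain ⟨r, hr⟩ : ∃ r : ℤ, (q : ℤ) = 8 * r + 5 := ⟨q / 8, by omega⟩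
  rcases Int.even_or_odd' (c + d) with ⟨e, he | he⟩
  · exfalso
    have hb : b = -4 * e := by linarith
    obtain ⟨f, hf⟩ : ∃ f : ℤ, a = 4 * f + 1 := ⟨2 * r + 1 + e - c, by linarith⟩
    have : 8 * r + 5 = 8 * (2 * f ^ 2 + f + 2 * e ^ 2) + 1 := by
      rw [← hr, hnorm, hf, hb]; ring
    omega
  · omega

/-- The sum of squares for a quartic character of an extension of odd degree `t`. Here `λ²` is the
quadratic character, so `G(λ)² = J(λ, λ) G(λ²) = J(λ, λ) √q`, and `J(λ⁻¹, λ⁻¹)` is the complex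
conjugate of `J(λ, λ)`. -/
lemma gaussSum_quartic (p : ℕ) [Fact p.Prime] (F : Type*) [Field F] [Fintype F]
    [Algebra (ZMod p) F] (hp : p % 8 = 5) {t : ℕ} (ht : Odd t) (hcard : Fintype.card F = p ^ t)
    {lam : MulChar F ℂ} (h4 : lam ^ 2 = qchar F) {C D : ℤ} (hCD : (p : ℤ) ^ t = C ^ 2 + D ^ 2)
    (hC4 : C ≡ -1 [ZMOD 4]) (hpC : ¬ (p : ℤ) ∣ C) :
    gaussSum lam (trChar p F) ^ 2 + gaussSum lam⁻¹ (trChar p F) ^ 2 =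
      2 * C * ((Real.sqrt (p ^ t : ℝ) : ℝ) : ℂ) := by
  have : CharP F p := charP_of_injective_algebraMap (algebraMap (ZMod p) F).injective p
  have hF : ringChar F ≠ 2 := by rw [ringChar.eq F p]; omega
  obtain ⟨a, b, hJ, hab, ha, hpa⟩ := jacobiSum_quartic hp ht hcard h4
  have haC : a = C := by
    refine sum_two_squares_unique (by omega) hab hCD ha ?_ hpa hpC
    have : C % 4 = -1 % 4 := hC4
    omega
  have h4' : lam⁻¹ ^ 2 = qchar F := by
    rw [inv_pow, h4]; exact qchar_isQuadratic.inv
  have hJ' : jacobiSum lam⁻¹ lam⁻¹ = a - b * Complex.I := by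
    have h2 : jacobiSum lam⁻¹ lam⁻¹ = star (jacobiSum lam lam) := by
      rw [jacobiSum, jacobiSum, star_sum]
      simp only [star_mul', MulChar.star_apply']
    rw [h2, hJ, ← starRingEnd_apply, map_add, map_mul, map_intCast, map_intCast, Complex.conj_I]
    ring
  have hne := qchar_ne_one hF
  have h1 := jacobiSum_mul_nontrivial (χ := lam) (φ := lam) (by rw [← sq, h4]; exact hne)
    (trChar p F)
  have h2 := jacobiSum_mul_nontrivial (χ := lam⁻¹) (φ := lam⁻¹) (by rw [← sq, h4']; exact hne)
    (trChar p F)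
  rw [← sq, h4, gaussSum_qchar_odd p F hp ht hcard, hJ] at h1
  rw [← sq, h4', gaussSum_qchar_odd p F hp ht hcard, hJ'] at h2
  rw [sq, sq, ← h1, ← h2, haC]
  ring

/-! ### Descent to the subfield of index two -/

/-- The exact power of two dividing `q - 1` is `2 ^ (n + 2)` when `q = p ^ (2 ^ n * t)`, `t` odd. -/
lemma pow_two_pow_mul_eq {p : ℕ} (hp : p % 8 = 5) {t : ℕ} (ht : Odd t) (n : ℕ) :
    ∃ k, Odd k ∧ p ^ (2 ^ n * t) = 1 + 2 ^ (n + 2) * k := by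
  induction n with
  | zero =>
    have h := odd_pow_mod_eight hp ht
    refine ⟨p ^ t / 4, by rw [Nat.odd_iff]; omega, ?_⟩
    simp only [pow_zero, one_mul, zero_add]
    omega
  | succ n ih =>
    obtain ⟨k, hk, h⟩ := ih
    refine ⟨k + 2 * (2 ^ n * k ^ 2), hk.add_even (even_two_mul _), ?_⟩
    rw [pow_succ 2 n, mul_right_comm, pow_mul, h]
    ring

section
variable {F : Type*} [Field F]

lemma pow_eq_qchar [Fintype F] {m : ℕ} {lam : MulChar F ℂ} (hord : orderOf lam = 2 ^ (m + 1)) :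
    lam ^ 2 ^ m = qchar F := by
  refine eq_qchar ?_ ?_
  · intro h
    have h1 := orderOf_dvd_of_pow_eq_one h
    rw [hord] at h1
    have h2 := (Nat.pow_dvd_pow_iff_le_right (by norm_num : 1 < 2)).mp h1
    omega
  · rw [← pow_mul, ← pow_succ, ← hord, pow_orderOf_eq_one]

/-- For a character whose order is the full power of two dividing `q - 1`, `λ(-1) = -1`: the
element `-1` is `y ^ ((q - 1) / 2)` for a nonsquare `y`. -/
lemma apply_neg_one [Fintype F] (hF : ringChar F ≠ 2) {m k : ℕ} (hk : Odd k)
    (hcard : Fintype.card F = 1 + 2 ^ (m + 1) * k)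
    {lam : MulChar F ℂ} (hord : orderOf lam = 2 ^ (m + 1)) : lam (-1) = -1 := by
  obtain ⟨y, hy⟩ := FiniteField.exists_nonsquare hF
  have hy0 : y ≠ 0 := by rintro rfl; exact hy (by simp)
  have h1 := (FiniteField.pow_dichotomy hF hy0).resolve_left
    (fun h => hy ((FiniteField.isSquare_iff hF hy0).mpr h))
  have h2 : Fintype.card F / 2 = 2 ^ m * k := by
    rw [hcard, pow_succ, show 1 + 2 ^ m * 2 * k = 1 + 2 * (2 ^ m * k) by ring]; omega
  rw [← h1, h2, pow_mul, map_pow, map_pow, ← MulChar.pow_apply' _ (by positivity),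
    pow_eq_qchar hord, qchar_eq_neg_one hy, hk.neg_one_pow]

/-- `λ(4) = -1`: an odd power of `4` equals `-1` because `2` is not a square modulo `p`, and `λ(4)`
has order a power of two. -/
lemma apply_four {p : ℕ} [Fact p.Prime] [Algebra (ZMod p) F] (hp : p % 8 = 5) {m : ℕ}
    {lam : MulChar F ℂ} (hord : orderOf lam = 2 ^ m) (hneg : lam (-1) = -1) : lam 4 = -1 := by
  obtain ⟨k, hk⟩ : ∃ k, p / 2 = 2 * (2 * k + 1) := ⟨p / 8, by omega⟩
  have h1 := congrArg (algebraMap (ZMod p) F) (two_pow_half p hp)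
  rw [hk, pow_mul, map_pow, map_pow, map_neg, map_one, map_ofNat] at h1
  norm_num at h1
  have h2 : lam 4 ^ (2 * k + 1) = -1 := by rw [← map_pow, h1, hneg]
  have h40 : (4 : F) ≠ 0 := by
    intro h; rw [h, zero_pow (by omega)] at h1
    simp at h1
  have h3 : lam 4 ^ 2 ^ m = 1 := by
    rw [← MulChar.pow_apply' _ (by positivity), ← hord, pow_orderOf_eq_one,
      MulChar.one_apply h40.isUnit]
  have h4 : lam 4 ^ 2 = 1 := by
    have h5 : orderOf (lam 4) ∣ 2 * (2 * k + 1) :=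
      orderOf_dvd_of_pow_eq_one (by rw [mul_comm, pow_mul, h2]; norm_num)
    have h6 : orderOf (lam 4) ∣ 2 ^ m := orderOf_dvd_of_pow_eq_one h3
    have h7 : Nat.Coprime (orderOf (lam 4)) (2 * k + 1) :=
      Nat.Coprime.coprime_dvd_left h6
        (Nat.Coprime.pow_left m (by rw [Nat.coprime_two_left]; exact ⟨k, rfl⟩))
    exact orderOf_dvd_iff_pow_eq_one.mp (h7.dvd_of_dvd_mul_right h5)
  rwa [pow_succ, pow_mul, h4, one_pow, one_mul] at h2

end

/-- Composition with the norm is compatible with powers of characters. -/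
lemma pow_apply_norm {K F : Type*} [Field K] [Field F] [Algebra K F] [FiniteDimensional K F]
    {μ : MulChar K ℂ} {χ : MulChar F ℂ} (h : ∀ z, χ z = μ (Algebra.norm K z)) (j : ℕ)
    (z : F) : (χ ^ j) z = (μ ^ j) (Algebra.norm K z) := by
  by_cases hz : z = 0
  · rw [hz, Algebra.norm_zero, MulChar.map_zero, MulChar.map_zero]
  · have hN : Algebra.norm K z ≠ 0 := Algebra.norm_ne_zero_iff.mpr hz
    rcases Nat.eq_zero_or_pos j with rfl | hj
    · rw [pow_zero, pow_zero, MulChar.one_apply (Ne.isUnit hz), MulChar.one_apply hN.isUnit]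
    · rw [MulChar.pow_apply' _ hj.ne', MulChar.pow_apply' _ hj.ne', h]

section
variable (p : ℕ) [Fact p.Prime] {K F : Type*} [Field K] [Fintype K] [Algebra (ZMod p) K]
  [Field F] [Fintype F] [Algebra (ZMod p) F] [Algebra K F] [IsScalarTower (ZMod p) K F]

/-- The Davenport–Hasse lifting relation in degree two, for the canonical additive characters. -/
lemma gaussSum_of_norm (hp : p ≠ 2) (hcard : Fintype.card F = Fintype.card K ^ 2)
    {μ : MulChar K ℂ} (hμ : μ ≠ 1) {χ : MulChar F ℂ} (h : ∀ z, χ z = μ (Algebra.norm K z)) :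
    gaussSum χ (trChar p F) = -(gaussSum μ (trChar p K)) ^ 2 := by
  have : CharP K p := charP_of_injective_algebraMap (algebraMap (ZMod p) K).injective p
  rw [← davenport_hasse_two (L := F) (by rwa [ringChar.eq K p]) hcard hμ]
  refine Finset.sum_congr rfl fun z _ => ?_
  rw [h, trChar_apply, trChar_apply, Algebra.trace_trace]

/-- The reduction from `F` to its subfield `K` of index two, with `r` elements. The duplication
formula reads `λ(4) G(λ) G(λη) = G(λ²) G(η)`. On the left, `λ(4) = -1` and `λη = λ ^ r` has the same
Gauss sum as `λ`; on the right, Davenport–Hasse gives `G(λ²) = -G(μ)²` and `G(η) = -r`. -/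
lemma gaussSum_sq_descent (hp : p % 8 = 5) {n t : ℕ} (ht : Odd t)
    (hK : Fintype.card K = p ^ (2 ^ n * t)) (hcard : Fintype.card F = Fintype.card K ^ 2)
    {lam : MulChar F ℂ} (hord : orderOf lam = 2 ^ (n + 3))
    {μ : MulChar K ℂ} (hordμ : orderOf μ = 2 ^ (n + 2))
    (h : ∀ z, (lam ^ 2) z = μ (Algebra.norm K z)) :
    gaussSum lam (trChar p F) ^ 2 =
      -(p ^ (2 ^ n * t) : ℕ) * gaussSum μ (trChar p K) ^ 2 := by
  have : CharP K p := charP_of_injective_algebraMap (algebraMap (ZMod p) K).injective p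
  have : CharP F p := charP_of_injective_algebraMap (algebraMap (ZMod p) F).injective p
  have hcK : ringChar K ≠ 2 := by rw [ringChar.eq K p]; omega
  have hcF : ringChar F ≠ 2 := by rw [ringChar.eq F p]; omega
  obtain ⟨k, hk, hpk⟩ := pow_two_pow_mul_eq hp ht n
  obtain ⟨k', hk', hpk'⟩ := pow_two_pow_mul_eq hp ht (n + 1)
  have hF : Fintype.card F = 1 + 2 ^ (n + 1 + 2) * k' := by
    rw [hcard, hK, ← hpk', ← pow_mul]; congr 1; ring
  have hηF : lam ^ 2 ^ (n + 2) = qchar F := pow_eq_qchar hord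
  have hηK : μ ^ 2 ^ (n + 1) = qchar K := pow_eq_qchar hordμ
  have hne2 : lam ^ 2 ≠ 1 := by
    intro h1
    have h2 := orderOf_dvd_of_pow_eq_one h1
    rw [hord] at h2
    have := Nat.le_of_dvd (by norm_num) h2
    have : 2 ^ 3 ≤ 2 ^ (n + 3) := Nat.pow_le_pow_right (by norm_num) (by omega)
    omega
  have hμ1 : μ ≠ 1 := by
    rintro rfl
    rw [orderOf_one] at hordμ
    have : 2 ^ 2 ≤ 2 ^ (n + 2) := Nat.pow_le_pow_right (by norm_num) (by omega)
    omega
  have h4 : lam 4 = -1 := apply_four hp hord (apply_neg_one hcF hk' hF hord)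
  -- `lam * η` is conjugate to `lam` under Frobenius
  have hconj : gaussSum (lam * qchar F) (trChar p F) = gaussSum lam (trChar p F) := by
    have h1 := gaussSum_pow_p_pow p F lam (2 ^ n * t)
    rw [hpk, pow_add, pow_one, pow_mul, hηF] at h1
    obtain ⟨e, rfl⟩ := hk
    have h2 : qchar F ^ 2 = 1 := qchar_isQuadratic.sq_eq_one
    rwa [pow_succ, pow_mul, h2, one_pow, one_mul] at h1
  have h5 := gaussSum_of_norm p (by omega) hcard hμ1 h
  have h6 : gaussSum (qchar F) (trChar p F) = -(p ^ (2 ^ n * t) : ℕ) := by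
    have h7 := gaussSum_of_norm p (by omega) hcard (qchar_ne_one hcK) (χ := qchar F) (fun z => by
      rw [← hηF, ← hηK, ← pow_apply_norm h, ← pow_mul]; congr 2; ring)
    rw [h7, gaussSum_sq (qchar_ne_one hcK) qchar_isQuadratic (trChar_isPrimitive p K),
      qchar_eq_one (by simp), one_mul, hK]
    rw [FiniteField.isSquare_neg_one_iff, hK, hpk,
      show 1 + 2 ^ (n + 2) * k = 1 + 4 * (2 ^ n * k) by ring]
    omega
  have h8 := gaussSum_duplication hcF hne2 (trChar_isPrimitive p F)
  rw [h4, hconj, h5, h6] at h8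
  linear_combination -h8

end

/-- A character of `F` of order `2 ^ (n + 3)` gives a character of order `2 ^ (n + 2)` of the
subfield of index two, whose composition with the norm is the square of the given one. -/
lemma exists_norm_char (p : ℕ) [Fact p.Prime] {K F : Type*} [Field K] [Fintype K]
    [Field F] [Fintype F] [Algebra K F] (hp : p % 8 = 5) {n t : ℕ} (ht : Odd t)
    (hK : Fintype.card K = p ^ (2 ^ n * t)) (hcard : Fintype.card F = Fintype.card K ^ 2)
    {lam : MulChar F ℂ} (hord : orderOf lam = 2 ^ (n + 3)) :
    ∃ μ : MulChar K ℂ, orderOf μ = 2 ^ (n + 2) ∧ ∀ z, (lam ^ 2) z = μ (Algebra.norm K z) := by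
  obtain ⟨k, hk, hpk⟩ := pow_two_pow_mul_eq hp ht n
  have hr : Fintype.card K + 1 = 2 * (2 ^ (n + 1) * k + 1) := by rw [hK, hpk]; ring
  have hdiv : (Nat.card F - 1) / (Nat.card K - 1) = 2 * (2 ^ (n + 1) * k + 1) := by
    rw [Nat.card_eq_fintype_card, Nat.card_eq_fintype_card, hcard, ← hr]
    have h1 : 1 < Fintype.card K := Fintype.one_lt_card
    obtain ⟨a, ha⟩ : ∃ a, Fintype.card K = a + 1 := ⟨Fintype.card K - 1, by omega⟩
    rw [ha, show (a + 1) ^ 2 - 1 = a * (a + 1 + 1) by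
      rw [show (a + 1) ^ 2 = a * (a + 1 + 1) + 1 by ring]; omega, Nat.add_sub_cancel]
    exact Nat.mul_div_cancel_left _ (by omega)
  -- `w = (r + 1) / 2` is odd, hence invertible modulo the order of `λ`
  obtain ⟨j, hj⟩ : ∃ j, (2 ^ (n + 1) * k + 1) * j ≡ 1 [MOD 2 ^ (n + 3)] := by
    have hcop : Nat.Coprime (2 ^ (n + 1) * k + 1) (2 ^ (n + 3)) := by
      apply Nat.Coprime.pow_right
      rw [Nat.coprime_two_right]
      exact ⟨2 ^ n * k, by ring⟩
    have h1 : 1 < 2 ^ (n + 3) := Nat.one_lt_two_pow (by omega)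
    obtain ⟨j, -, hj⟩ := Nat.exists_mul_mod_eq_one_of_coprime hcop h1
    exact ⟨j, by rw [Nat.ModEq, hj, Nat.mod_eq_of_lt h1]⟩
  have hj0 : j ≠ 0 := by
    rintro rfl
    rw [mul_zero] at hj
    have h1 := (Nat.modEq_iff_dvd' (by norm_num : 0 ≤ 1)).mp hj
    have h2 := Nat.le_of_dvd (by norm_num) h1
    have : 2 ^ 3 ≤ 2 ^ (n + 3) := Nat.pow_le_pow_right (by norm_num) (by omega)
    omega
  -- the restriction `ρ` of `λ` to `K`; composed with the norm it gives `λ ^ (2 w)`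
  set ρ : MulChar K ℂ := MulChar.ofUnitHom
    ((MulChar.toUnitHom lam).comp (Units.map (algebraMap K F).toMonoidHom)) with hρ
  have hρa : ∀ y : K, y ≠ 0 → ρ y = lam (algebraMap K F y) := by
    intro y hy
    have := MulChar.ofUnitHom_coe
      ((MulChar.toUnitHom lam).comp (Units.map (algebraMap K F).toMonoidHom)) (Units.mk0 y hy)
    rw [← hρ] at this
    exact this
  have hnorm : ∀ z, (lam ^ 2) z = (ρ ^ j) (Algebra.norm K z) := by
    intro z
    by_cases hz : z = 0
    · rw [hz, Algebra.norm_zero, MulChar.map_zero, MulChar.map_zero]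
    · have hN : Algebra.norm K z ≠ 0 := Algebra.norm_ne_zero_iff.mpr hz
      rw [MulChar.pow_apply' _ hj0, hρa _ hN, FiniteField.algebraMap_norm_eq_pow, hdiv,
        MulChar.pow_apply' _ two_ne_zero, map_pow, ← pow_mul, mul_assoc, mul_comm 2, pow_mul]
      congr 1
      have h1 : lam z ^ 2 ^ (n + 3) = 1 := by
        rw [← MulChar.pow_apply' _ (by positivity), ← hord, pow_orderOf_eq_one,
          MulChar.one_apply (Ne.isUnit hz)]
      have h2 : orderOf (lam z) ∣ 2 ^ (n + 3) := orderOf_dvd_of_pow_eq_one h1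
      have h3 := hj.of_dvd h2
      rw [← pow_mod_orderOf, h3, pow_mod_orderOf, pow_one]
  refine ⟨ρ ^ j, ?_, hnorm⟩
  have hiff : ∀ i, (ρ ^ j) ^ i = 1 ↔ lam ^ (2 * i) = 1 := by
    intro i
    rw [pow_mul]
    constructor
    · intro h
      ext z
      rw [pow_apply_norm hnorm, h, MulChar.one_apply, MulChar.one_apply z.isUnit]
      exact (Algebra.norm_ne_zero_iff.mpr z.ne_zero).isUnit
    · intro h
      ext y
      obtain ⟨z, hz⟩ := FiniteField.norm_surjective K F (y : K)
      have hz0 : z ≠ 0 := by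
        rintro rfl; rw [Algebra.norm_zero] at hz; exact y.ne_zero hz.symm
      rw [← hz, ← pow_apply_norm hnorm, h, MulChar.one_apply hz0.isUnit, hz,
        MulChar.one_apply y.isUnit]
  refine Nat.dvd_antisymm (orderOf_dvd_of_pow_eq_one ?_) ?_
  · rw [hiff, ← pow_succ', ← hord, pow_orderOf_eq_one]
  · have h1 := orderOf_dvd_of_pow_eq_one ((hiff _).mp (pow_orderOf_eq_one (ρ ^ j)))
    rw [hord, pow_succ', pow_succ'] at h1
    rw [pow_succ']
    exact Nat.dvd_of_mul_dvd_mul_left two_pos h1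

/-- The descent step: existence of the subfield of index two and of the character on it. -/
lemma exists_descent (p : ℕ) [Fact p.Prime] {F : Type*} [Field F] [Fintype F] [Algebra (ZMod p) F]
    (hp : p % 8 = 5) {n t : ℕ} (ht : Odd t) (hcard : Fintype.card F = p ^ (2 ^ (n + 1) * t))
    {lam : MulChar F ℂ} (hord : orderOf lam = 2 ^ (n + 3)) :
    ∃ (K : Type) (_ : Field K) (_ : Fintype K) (_ : Algebra (ZMod p) K) (μ : MulChar K ℂ),
      Fintype.card K = p ^ (2 ^ n * t) ∧ orderOf μ = 2 ^ (n + 2) ∧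
      gaussSum lam (trChar p F) ^ 2 =
        -(p ^ (2 ^ n * t) : ℕ) * gaussSum μ (trChar p K) ^ 2 ∧
      gaussSum lam⁻¹ (trChar p F) ^ 2 =
        -(p ^ (2 ^ n * t) : ℕ) * gaussSum μ⁻¹ (trChar p K) ^ 2 := by
  have hpp := (Fact.out : p.Prime)
  have ht0 : t ≠ 0 := by rintro rfl; simp at ht
  have hd0 : 2 ^ n * t ≠ 0 := by positivity
  let K := GaloisField p (2 ^ n * t)
  let _ : Fintype K := Fintype.ofFinite K
  have hK : Fintype.card K = p ^ (2 ^ n * t) := by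
    rw [← Nat.card_eq_fintype_card]; exact GaloisField.card p _ hd0
  have hcard2 : Fintype.card F = Fintype.card K ^ 2 := by
    rw [hcard, hK, ← pow_mul]; congr 1; ring
  have hfin : Module.finrank (ZMod p) F = 2 ^ (n + 1) * t := by
    have h1 := Module.card_eq_pow_finrank (K := ZMod p) (V := F)
    rw [hcard, ZMod.card] at h1
    exact (Nat.pow_right_injective hpp.two_le h1).symm
  obtain ⟨f⟩ := FiniteField.nonempty_algHom_of_finrank_dvd (F := ZMod p) (K := K) (L := F) (by
    rw [hfin, GaloisField.finrank p hd0]; exact ⟨2, by ring⟩)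
  let _ : Algebra K F := f.toRingHom.toAlgebra
  have : IsScalarTower (ZMod p) K F := IsScalarTower.of_algHom f
  obtain ⟨μ, hμ, hnorm⟩ := exists_norm_char p hp ht hK hcard2 hord
  refine ⟨K, inferInstance, inferInstance, inferInstance, μ, hK, hμ,
    gaussSum_sq_descent p hp ht hK hcard2 hord hμ hnorm,
    gaussSum_sq_descent p hp ht hK hcard2 (by rwa [orderOf_inv]) (by rwa [orderOf_inv]) fun z => ?_⟩
  have hN : (lam ^ 2)⁻¹ z = (lam ^ 2) z⁻¹ := MulChar.inv_apply' _ z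
  have hNi : Algebra.norm K z⁻¹ = (Algebra.norm K z)⁻¹ := by
    by_cases hz : z = 0
    · rw [hz, inv_zero, Algebra.norm_zero, inv_zero]
    · exact eq_inv_of_mul_eq_one_left (by rw [← map_mul, inv_mul_cancel₀ hz, map_one])
  rw [inv_pow, hN, hnorm, hNi, MulChar.inv_apply']

/-! ### Evaluation of the sum and of the product -/

/-- Multiplication by `-q` in the induction step, with `q = p ^ (2 ^ n * t)`. -/
lemma step_algebra (p n t : ℕ) (C w : ℂ) :
    -(p ^ (2 ^ n * t) : ℕ) * (2 * ((-1) ^ n * C) * ((p : ℂ) ^ t) ^ (2 ^ n - 1) * w) =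
      2 * ((-1) ^ (n + 1) * C) * ((p : ℂ) ^ t) ^ (2 ^ (n + 1) - 1) * w := by
  have h4 : 2 ^ (n + 1) - 1 = 2 ^ n + (2 ^ n - 1) := by
    have := Nat.one_le_two_pow (n := n)
    omega
  rw [h4, pow_add ((p : ℂ) ^ t), pow_succ (-1 : ℂ) n]
  push_cast
  rw [mul_comm (2 ^ n) t, pow_mul]
  ring

/-- The value of `G(λ)² + G(λ⁻¹)²`, by induction along the tower of quadratic extensions. The
induction itself takes place in the universe of the Galois fields. -/
lemma gaussSum_sq_add_aux (p : ℕ) [Fact p.Prime] (hp : p % 8 = 5) {t : ℕ} (ht : Odd t)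
    {C D : ℤ} (hCD : (p : ℤ) ^ t = C ^ 2 + D ^ 2) (hC4 : C ≡ -1 [ZMOD 4]) (hpC : ¬ (p : ℤ) ∣ C)
    (n : ℕ) : ∀ (F : Type) [Field F] [Fintype F] [Algebra (ZMod p) F]
      (_ : Fintype.card F = p ^ (2 ^ n * t)) (lam : MulChar F ℂ) (_ : orderOf lam = 2 ^ (n + 2)),
      gaussSum lam (trChar p F) ^ 2 + gaussSum lam⁻¹ (trChar p F) ^ 2 =
        2 * ((-1) ^ n * C) * ((p : ℂ) ^ t) ^ (2 ^ n - 1) * ((√(p ^ t : ℝ) : ℝ) : ℂ) := by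
  induction n with
  | zero =>
    intro F _ _ _ hcard lam hord
    have h4 : lam ^ 2 = qchar F := pow_eq_qchar (m := 1) hord
    rw [gaussSum_quartic p F hp ht (by simpa using hcard) h4 hCD hC4 hpC]
    simp
  | succ n ih =>
    intro F _ _ _ hcard lam hord
    obtain ⟨K, _, _, _, μ, hK, hμ, h1, h2⟩ := exists_descent p hp ht hcard hord
    have h3 := ih K hK μ hμ
    rw [h1, h2, ← mul_add, h3, step_algebra]

/-- The value of `G(λ)² + G(λ⁻¹)²` for a character `λ` of order `2 ^ (n + 2)` of a field with
`p ^ (2 ^ n * t)` elements, `t` odd. -/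
lemma gaussSum_sq_add (p : ℕ) [Fact p.Prime] (hp : p % 8 = 5) {t : ℕ} (ht : Odd t)
    {C D : ℤ} (hCD : (p : ℤ) ^ t = C ^ 2 + D ^ 2) (hC4 : C ≡ -1 [ZMOD 4]) (hpC : ¬ (p : ℤ) ∣ C)
    (n : ℕ) (F : Type*) [Field F] [Fintype F] [Algebra (ZMod p) F]
    (hcard : Fintype.card F = p ^ (2 ^ n * t)) {lam : MulChar F ℂ}
    (hord : orderOf lam = 2 ^ (n + 2)) :
    gaussSum lam (trChar p F) ^ 2 + gaussSum lam⁻¹ (trChar p F) ^ 2 =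
      2 * ((-1) ^ n * C) * ((p : ℂ) ^ t) ^ (2 ^ n - 1) * ((√(p ^ t : ℝ) : ℝ) : ℂ) := by
  cases n with
  | zero =>
    have h4 : lam ^ 2 = qchar F := pow_eq_qchar (m := 1) hord
    rw [gaussSum_quartic p F hp ht (by simpa using hcard) h4 hCD hC4 hpC]
    simp
  | succ n =>
    obtain ⟨K, _, _, _, μ, hK, hμ, h1, h2⟩ := exists_descent p hp ht hcard hord
    have h3 := gaussSum_sq_add_aux p hp ht hCD hC4 hpC n K hK μ hμ
    rw [h1, h2, ← mul_add, h3, step_algebra]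

/-- The product `G(λ) G(λ⁻¹) = λ(-1) q` in the case `λ(-1) = -1`. -/
lemma gaussSum_mul_gaussSum_inv (p : ℕ) [Fact p.Prime] {F : Type*} [Field F] [Fintype F]
    [Algebra (ZMod p) F] {lam : MulChar F ℂ} (h1 : lam ≠ 1) (h : lam (-1) = -1) :
    gaussSum lam (trChar p F) * gaussSum lam⁻¹ (trChar p F) = -(Fintype.card F : ℂ) := by
  have h2 := gaussSum_mul_gaussSum_eq_card h1 (trChar_isPrimitive p F)
  have h3 : lam⁻¹ (-1) = -1 := by rw [MulChar.inv_apply', inv_neg, inv_one, h]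
  have h4 := mul_gaussSum_inv_eq_gaussSum lam⁻¹ (trChar p F)
  rw [h3] at h4
  rw [← h4]
  linear_combination -h2

/-- The real powers of `q = P ^ (2 ^ n)` in the theorem: `q ^ ((2 ^ (n + 1) - 1) / 2 ^ (n + 1))`
is `P ^ (2 ^ n - 1) √P`, and `q ^ (1 / 2 ^ (n + 1))` is `√P`. -/
lemma rpow_identities {P : ℝ} (hP : 0 ≤ P) (n : ℕ) :
    (P ^ 2 ^ n) ^ ((2 ^ (n + 1) - 1) / 2 ^ (n + 1) : ℝ) = P ^ (2 ^ n - 1) * √P ∧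
    (P ^ 2 ^ n) ^ ((1 : ℝ) / 2 ^ (n + 1)) = √P := by
  have h2 : (2 : ℝ) ^ n ≠ 0 := by positivity
  have h1 := Nat.one_le_two_pow (n := n)
  constructor
  · rw [Real.sqrt_eq_rpow, ← Real.rpow_natCast P (2 ^ n), ← Real.rpow_natCast P (2 ^ n - 1),
      ← Real.rpow_mul hP, ← Real.rpow_add_of_nonneg hP (by positivity) (by positivity)]
    congr 1
    rw [Nat.cast_sub h1]
    push_cast
    field_simp
    ring
  · rw [Real.sqrt_eq_rpow, ← Real.rpow_natCast, ← Real.rpow_mul hP]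
    congr 1
    push_cast
    field_simp
    ring

theorem stmt14 (p s m : ℕ) [Fact p.Prime] (hp : p % 8 = 5) (hs : 0 < s) (hm : 2 ≤ m)
    (F : Type*) [Field F] [Fintype F] [Algebra (ZMod p) F] (hcard : Fintype.card F = p ^ s)
    (hdvd : 2 ^ m ∣ p ^ s - 1) (hndvd : ¬ 2 ^ (m + 1) ∣ p ^ s - 1)
    (lam : MulChar F ℂ) (hord : orderOf lam = 2 ^ m)
    (C D : ℤ) (hCD : (p : ℤ) ^ (s / 2 ^ (m - 2)) = C ^ 2 + D ^ 2)
    (hC4 : C ≡ -1 [ZMOD 4]) (hpC : ¬ (p : ℤ) ∣ C) :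
    (gaussC p F lam + gaussC p F lam⁻¹) ^ 2 =
      -2 * ((((p : ℝ) ^ s) ^ (((2 ^ (m - 1) - 1) / 2 ^ (m - 1) : ℝ)) : ℝ) : ℂ) *
        (((((p : ℝ) ^ s) ^ ((1 : ℝ) / 2 ^ (m - 1)) : ℝ) : ℂ) - ((-1) ^ m * C : ℤ)) ∧
    (gaussC p F lam - gaussC p F lam⁻¹) ^ 2 =
      2 * ((((p : ℝ) ^ s) ^ (((2 ^ (m - 1) - 1) / 2 ^ (m - 1) : ℝ)) : ℝ) : ℂ) *
        (((((p : ℝ) ^ s) ^ ((1 : ℝ) / 2 ^ (m - 1)) : ℝ) : ℂ) + ((-1) ^ m * C : ℤ)) := by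
  obtain ⟨n, t, ht, rfl⟩ := Nat.exists_eq_two_pow_mul_odd hs.ne'
  obtain ⟨k, hk, hpk⟩ := pow_two_pow_mul_eq hp ht n
  -- comparing powers of two dividing `q - 1` identifies `m` with `n + 2`
  obtain rfl : m = n + 2 := by
    have hk2 : ¬ 2 ∣ k := by rwa [← even_iff_two_dvd, Nat.not_even_iff_odd]
    rw [hpk, Nat.add_sub_cancel_left] at hdvd hndvd
    refine le_antisymm ?_ ?_
    · by_contra! h
      have h1 : 2 ^ (n + 2) * 2 ∣ 2 ^ (n + 2) * k := by
        rw [← pow_succ]; exact (pow_dvd_pow 2 h).trans hdvd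
      exact hk2 (Nat.dvd_of_mul_dvd_mul_left (by positivity) h1)
    · by_contra! h
      exact hndvd (Dvd.dvd.mul_right (pow_dvd_pow 2 h) k)
  rw [Nat.add_sub_cancel, Nat.mul_div_cancel_left t (by positivity)] at hCD
  have hF : ringChar F ≠ 2 := by
    have : CharP F p := charP_of_injective_algebraMap (algebraMap (ZMod p) F).injective p
    rw [ringChar.eq F p]
    omega
  have hneg : lam (-1) = -1 :=
    apply_neg_one hF hk (by rw [hcard, hpk]) hord
  have hlam : lam ≠ 1 := by
    rintro rfl
    rw [orderOf_one] at hord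
    exact absurd hord.symm (Nat.one_lt_two_pow (by omega)).ne'
  have hsum := gaussSum_sq_add p hp ht hCD hC4 hpC n F hcard hord
  have hprod := gaussSum_mul_gaussSum_inv p hlam hneg
  have hP : (0 : ℝ) ≤ (p : ℝ) ^ t := by positivity
  obtain ⟨hr1, hr2⟩ := rpow_identities hP n
  have hq : (p : ℝ) ^ (2 ^ n * t) = ((p : ℝ) ^ t) ^ 2 ^ n := by rw [← pow_mul, mul_comm]
  have hsq : ((√((p : ℝ) ^ t) : ℝ) : ℂ) ^ 2 = (p : ℂ) ^ t := by
    rw [← Complex.ofReal_pow, Real.sq_sqrt hP]; push_cast; rfl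
  have hcardC : (Fintype.card F : ℂ) = ((p : ℂ) ^ t) ^ (2 ^ n - 1) * (p : ℂ) ^ t := by
    rw [hcard, ← pow_succ, Nat.sub_add_cancel Nat.one_le_two_pow, ← pow_mul, mul_comm t]
    push_cast; rfl
  rw [hcardC] at hprod
  rw [gaussC_eq, gaussC_eq, hq, show n + 2 - 1 = n + 1 by omega, hr1, hr2]
  push_cast
  rw [pow_add (-1 : ℂ) n 2, neg_one_sq, mul_one]
  constructor
  · linear_combination hsum + 2 * hprod +
      2 * ((p : ℂ) ^ t) ^ (2 ^ n - 1) * hsq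
  · linear_combination hsum - 2 * hprod -
      2 * ((p : ℂ) ^ t) ^ (2 ^ n - 1) * hsq
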